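/- arXiv:2208.12174 — 3 statements merged into one kernel-verified Lean document; each statement's English description precedes it below -/
import Mathlib

section
/- For every n ≥ 1, the Chacon-type map U_n is an automorphism of T² and is a cyclic permutation of dyadic squares: there is an enumeration S_1, S_2, …, S_{4^n−1} of the 4^n − 1 half-open dyadic squares of side 2^{−n} in [0,1)² other than R_n = [1−2^{−n},1)×[0,2^{−n}), with S_1 = [0,2^{−n})×[1−2^{−n},1), such that U_n maps S_j onto S_{j+1} by a translation for every 1 ≤ j ≤ 4^n−2, maps S_{4^n−1} onto S_1 by a translation, and is the identity on R_n. -/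
/-!
On every dyadic square of side `2^{-n}` the map `U_n` is a translation onto another such square, so
it is described by a map `cellMap n` on indices (`chaconU_eq`). The claim becomes combinatorial:
`cellMap n` fixes the index of `R_n` and permutes the remaining `4^n - 1` indices in one cycle.

This is proved by induction (`covers_succ`). Outside the block formed by the last square of the
previous level and `R_{n-1}`, the index map commutes with passing to the enclosing square of the
previous level. Hence each quarter of the previous `S_1` climbs the previous tower of
`4^{n-1} - 1` squares, up to the corresponding quarter of its last square. The modifications inside
the block chain these four columns together, and insert the three quarters of `R_{n-1}` other than
`R_n`; the orbit of `S_1` thus visits all `4 (4^{n-1} - 1) + 3 = 4^n - 1` squares. Injectivity of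
the enumeration follows from surjectivity by counting.

Consequently `U_n` iterated `4^n - 1` times is the identity, so its inverse is an iterate of `U_n`
and is measurable. Measure is preserved because `U_n` translates the squares and permutes them
(`volume_chaconU_preimage`).
-/

open MeasureTheory Filter Set
open scoped ENNReal symmDiff

noncomputable section

instance fact01 : Fact ((0:ℝ) < 1) := ⟨one_pos⟩

/-- The two-dimensional torus `[0,1)²` with coordinatewise addition mod 1. -/
abbrev T2 : Type := AddCircle (1:ℝ) × AddCircle (1:ℝ)

/-- The canonical representative in `[0,1)` of a point of the circle. -/
noncomputable def rep (x : AddCircle (1:ℝ)) : ℝ := ((AddCircle.equivIco 1 0) x : ℝ)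

/-- The point of the torus with coordinates `a`, `b` (mod 1). -/
noncomputable def tv (a b : ℝ) : T2 := ((a : AddCircle (1:ℝ)), (b : AddCircle (1:ℝ)))

open Classical in
/-- The Chacon-type maps `U_n` on the torus. -/
noncomputable def chaconU : ℕ → T2 → T2
  | 0 => id
  | 1 => fun x =>
      if 0 ≤ rep x.1 ∧ rep x.1 < 1/2 ∧ 1/2 ≤ rep x.2 ∧ rep x.2 < 1 then x + tv (1/2) 0
      else if 1/2 ≤ rep x.1 ∧ rep x.1 < 1 ∧ 1/2 ≤ rep x.2 ∧ rep x.2 < 1 then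
        x + tv (-(1/2)) (-(1/2))
      else if 0 ≤ rep x.1 ∧ rep x.1 < 1/2 ∧ 0 ≤ rep x.2 ∧ rep x.2 < 1/2 then x + tv 0 (1/2)
      else x
  | (n+2) => fun x =>
      let s : ℝ := 1 / 2 ^ (n+2)
      let a := rep x.1
      let b := rep x.2
      if 1-4*s ≤ a ∧ a < 1-3*s ∧ s ≤ b ∧ b < 2*s then x + tv (5*s-1) (1-2*s)
      else if 1-3*s ≤ a ∧ a < 1-2*s ∧ s ≤ b ∧ b < 2*s then x + tv s 0
      else if 1-4*s ≤ a ∧ a < 1-3*s ∧ 0 ≤ b ∧ b < s then x + tv (3*s) s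
      else if 1-3*s ≤ a ∧ a < 1-2*s ∧ 0 ≤ b ∧ b < s then x + tv s 0
      else if 1-2*s ≤ a ∧ a < 1 ∧ s ≤ b ∧ b < 2*s then x + tv (2*s-1) (1-3*s)
      else if 1-2*s ≤ a ∧ a < 1-s ∧ 0 ≤ b ∧ b < s then x + tv (2*s-1) (1-s)
      else if 1-s ≤ a ∧ a < 1 ∧ 0 ≤ b ∧ b < s then x
      else chaconU (n+1) x

/-- An automorphism of the torus: measurable, bijective up to null sets with measurable
inverse, and measure-preserving. -/
def IsAutomorphism (U : T2 → T2) : Prop :=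
  Measurable U ∧ ∃ V : T2 → T2, Measurable V ∧
    (∀ᵐ x ∂(volume : Measure T2), V (U x) = x) ∧
    (∀ᵐ x ∂(volume : Measure T2), U (V x) = x) ∧
    ∀ A : Set T2, MeasurableSet A → volume (U ⁻¹' A) = volume A


/-- The half-open dyadic square of side `2^{-n}` with lower-left corner
`(i/2^n, j/2^n)`. -/
def dySq (n i j : ℕ) : Set T2 :=
  {x : T2 | (i : ℝ)/2^n ≤ rep x.1 ∧ rep x.1 < ((i : ℝ)+1)/2^n ∧
            (j : ℝ)/2^n ≤ rep x.2 ∧ rep x.2 < ((j : ℝ)+1)/2^n}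

/-- `f` maps `A` onto `B` by a translation of the torus. -/
def MapsByTranslation (f : T2 → T2) (A B : Set T2) : Prop :=
  (∃ v : T2, ∀ x ∈ A, f x = x + v) ∧ f '' A = B

/-! ### Coordinates on the torus -/

lemma rep_mem (x : AddCircle (1:ℝ)) : 0 ≤ rep x ∧ rep x < 1 := by
  have h := (AddCircle.equivIco (1:ℝ) 0 x).2
  simpa [rep] using h

lemma coe_rep (x : AddCircle (1:ℝ)) : ((rep x : ℝ) : AddCircle (1:ℝ)) = x :=
  AddCircle.coe_equivIco

lemma rep_coe {a : ℝ} (h0 : 0 ≤ a) (h1 : a < 1) : rep (a : AddCircle (1:ℝ)) = a := by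
  unfold rep
  rw [AddCircle.coe_equivIco_mk_apply]
  simp [Int.fract_eq_self.2 ⟨h0, h1⟩]

lemma rep_add_coe (x : AddCircle (1:ℝ)) {c : ℝ} (h0 : 0 ≤ rep x + c) (h1 : rep x + c < 1) :
    rep (x + (c : AddCircle (1:ℝ))) = rep x + c := by
  have h : x + (c : AddCircle (1:ℝ)) = ((rep x + c : ℝ) : AddCircle (1:ℝ)) := by
    rw [AddCircle.coe_add, coe_rep]
  rw [h, rep_coe h0 h1]

lemma measurable_rep : Measurable rep :=
  measurable_subtype_coe.comp (AddCircle.measurableEquivIco (1:ℝ) 0).measurable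

/-! ### Dyadic squares and the translations between them -/

/-- The translation vector carrying the level-`n` dyadic square with index `p` to the one with
index `q`. -/
def shift (n : ℕ) (p q : ℕ × ℕ) : T2 :=
  tv (((q.1 : ℝ) - p.1) / 2^n) (((q.2 : ℝ) - p.2) / 2^n)

lemma tv_add (a b c d : ℝ) : tv a b + tv c d = tv (a + c) (b + d) := by
  simp [tv]

lemma shift_add (n : ℕ) (p q r : ℕ × ℕ) : shift n p q + shift n q r = shift n p r := by
  unfold shift
  rw [tv_add]
  congr 1 <;> ring

lemma shift_self (n : ℕ) (p : ℕ × ℕ) : shift n p p = 0 := by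
  simp [shift, tv]

lemma measurableSet_dySq (n i j : ℕ) : MeasurableSet (dySq n i j) := by
  have h1 : Measurable fun x : T2 => rep x.1 := measurable_rep.comp measurable_fst
  have h2 : Measurable fun x : T2 => rep x.2 := measurable_rep.comp measurable_snd
  exact (measurableSet_le measurable_const h1).inter
    ((measurableSet_lt h1 measurable_const).inter
      ((measurableSet_le measurable_const h2).inter (measurableSet_lt h2 measurable_const)))

lemma rep_add_coord {n p q : ℕ} {x : AddCircle (1:ℝ)} (hq : q < 2^n)
    (h1 : (p : ℝ)/2^n ≤ rep x) (h2 : rep x < ((p : ℝ)+1)/2^n) :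
    (q : ℝ)/2^n ≤ rep (x + ((((q : ℝ) - p) / 2^n : ℝ) : AddCircle (1:ℝ))) ∧
      rep (x + ((((q : ℝ) - p) / 2^n : ℝ) : AddCircle (1:ℝ))) < ((q : ℝ)+1)/2^n := by
  have hN : (0:ℝ) < 2^n := by positivity
  have hq' : (q : ℝ) + 1 ≤ 2^n := by exact_mod_cast hq
  have hq0 : (0:ℝ) ≤ (q : ℝ)/2^n := by positivity
  have hq1 : ((q : ℝ)+1)/2^n ≤ 1 := (div_le_one hN).2 hq'
  have e1 : (p : ℝ)/2^n + ((q : ℝ) - p) / 2^n = (q : ℝ)/2^n := by ring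
  have e2 : ((p : ℝ)+1)/2^n + ((q : ℝ) - p) / 2^n = ((q : ℝ)+1)/2^n := by ring
  rw [rep_add_coe x (by linarith) (by linarith)]
  constructor <;> linarith

lemma add_shift_mem {n : ℕ} {p q : ℕ × ℕ} {x : T2} (hq : q.1 < 2^n ∧ q.2 < 2^n)
    (hx : x ∈ dySq n p.1 p.2) : x + shift n p q ∈ dySq n q.1 q.2 := by
  obtain ⟨h1, h2, h3, h4⟩ := hx
  have A := rep_add_coord hq.1 h1 h2
  have B := rep_add_coord hq.2 h3 h4
  exact ⟨A.1, A.2, B.1, B.2⟩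

lemma coord_index (n : ℕ) (x : AddCircle (1:ℝ)) :
    ∃ i : ℕ, i < 2^n ∧ (i : ℝ)/2^n ≤ rep x ∧ rep x < ((i : ℝ)+1)/2^n := by
  have hN : (0:ℝ) < 2^n := by positivity
  obtain ⟨h0, h1⟩ := rep_mem x
  have hp : 0 ≤ rep x * 2^n := by positivity
  refine ⟨⌊rep x * 2^n⌋₊, ?_, ?_, ?_⟩
  · rw [Nat.floor_lt hp]
    push_cast
    nlinarith
  · rw [div_le_iff₀ hN]
    exact Nat.floor_le hp
  · rw [lt_div_iff₀ hN]
    exact Nat.lt_floor_add_one _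

lemma exists_mem_dySq (n : ℕ) (x : T2) :
    ∃ p : ℕ × ℕ, (p.1 < 2^n ∧ p.2 < 2^n) ∧ x ∈ dySq n p.1 p.2 := by
  obtain ⟨i, hi, h1, h2⟩ := coord_index n x.1
  obtain ⟨j, hj, h3, h4⟩ := coord_index n x.2
  exact ⟨(i, j), ⟨hi, hj⟩, h1, h2, h3, h4⟩

lemma coord_index_unique {n i j : ℕ} {a : ℝ} (h1 : (i : ℝ)/2^n ≤ a) (h2 : a < ((i : ℝ)+1)/2^n)
    (h3 : (j : ℝ)/2^n ≤ a) (h4 : a < ((j : ℝ)+1)/2^n) : i = j := by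
  have hN : (0:ℝ) < 2^n := by positivity
  have A : (i : ℝ) < (j : ℝ) + 1 := (div_lt_div_iff_of_pos_right hN).1 (h1.trans_lt h4)
  have B : (j : ℝ) < (i : ℝ) + 1 := (div_lt_div_iff_of_pos_right hN).1 (h3.trans_lt h2)
  have A' : i < j + 1 := by exact_mod_cast A
  have B' : j < i + 1 := by exact_mod_cast B
  omega

lemma dySq_index_unique {n : ℕ} {p q : ℕ × ℕ} {x : T2} (hp : x ∈ dySq n p.1 p.2)
    (hq : x ∈ dySq n q.1 q.2) : p = q := by
  obtain ⟨a1, a2, a3, a4⟩ := hp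
  obtain ⟨b1, b2, b3, b4⟩ := hq
  exact Prod.ext (coord_index_unique a1 a2 b1 b2) (coord_index_unique a3 a4 b3 b4)

/-! ### The combinatorial model -/

/-- The map on indices of level-`n` dyadic squares induced by `chaconU n`. At level `n + 2` the
eight squares in the block `[1-4s,1)×[0,2s)` are treated separately; any other square moves along
with the level-`(n+1)` square containing it. -/
def cellMap : ℕ → ℕ × ℕ → ℕ × ℕ
  | 0 => id
  | 1 => fun p =>
      if p = (0, 1) then (1, 1) else if p = (1, 1) then (0, 0)
      else if p = (0, 0) then (0, 1) else p
  | (n+2) => fun p =>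
      if p.1 + 4 = 2^(n+2) ∧ p.2 = 1 then (1, 2^(n+2) - 1)
      else if p.1 + 3 = 2^(n+2) ∧ p.2 = 1 then (p.1 + 1, 1)
      else if p.1 + 4 = 2^(n+2) ∧ p.2 = 0 then (p.1 + 3, 1)
      else if p.1 + 3 = 2^(n+2) ∧ p.2 = 0 then (p.1 + 1, 0)
      else if 2^(n+2) ≤ p.1 + 2 ∧ p.2 = 1 then (p.1 + 2 - 2^(n+2), 2^(n+2) - 2)
      else if p.1 + 2 = 2^(n+2) ∧ p.2 = 0 then (0, 2^(n+2) - 1)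
      else if p.1 + 1 = 2^(n+2) ∧ p.2 = 0 then p
      else (2 * (cellMap (n+1) (p.1/2, p.2/2)).1 + p.1 % 2,
            2 * (cellMap (n+1) (p.1/2, p.2/2)).2 + p.2 % 2)

/-- On a dyadic interval, comparisons with multiples of the mesh become comparisons of indices. -/
lemma grid_iff {s a : ℝ} {i : ℕ} (hs : 0 < s) (h1 : (i : ℝ) * s ≤ a) (h2 : a < ((i : ℝ) + 1) * s)
    (k : ℤ) {c : ℝ} (hc : c = k * s) : (c ≤ a ↔ k ≤ i) ∧ (a < c ↔ (i : ℤ) < k) := by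
  have key : c ≤ a ↔ k ≤ i := by
    subst hc
    constructor
    · intro h
      have h3 : (k : ℝ) < (i : ℝ) + 1 := lt_of_mul_lt_mul_right (h.trans_lt h2) hs.le
      have h4 : k < (i : ℤ) + 1 := by exact_mod_cast h3
      omega
    · intro h
      have h3 : (k : ℝ) ≤ (i : ℝ) := by exact_mod_cast h
      nlinarith
  refine ⟨key, ?_⟩
  rw [← not_le, key, not_le]

lemma chaconU_one_eq {x : T2} {p : ℕ × ℕ} (hp : p.1 < 2^1 ∧ p.2 < 2^1)
    (hx : x ∈ dySq 1 p.1 p.2) : chaconU 1 x = x + shift 1 p (cellMap 1 p) := by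
  obtain ⟨i, j⟩ := p
  obtain ⟨h1, h2, h3, h4⟩ := hx
  simp only [pow_one] at h1 h2 h3 h4
  obtain ⟨hi, hj⟩ := hp
  have hi' : i < 2 := hi
  have hj' : j < 2 := hj
  unfold chaconU
  interval_cases i <;> interval_cases j <;> norm_num at h1 h2 h3 h4 <;>
    simp only [shift, cellMap]
  · rw [if_neg (by rintro ⟨_, _, _, _⟩; linarith), if_neg (by rintro ⟨_, _, _, _⟩; linarith),
      if_pos ⟨by linarith, by linarith, by linarith, by linarith⟩]
    norm_num
  · rw [if_pos ⟨by linarith, by linarith, by linarith, by linarith⟩]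
    norm_num
  · rw [if_neg (by rintro ⟨_, _, _, _⟩; linarith), if_neg (by rintro ⟨_, _, _, _⟩; linarith),
      if_neg (by rintro ⟨_, _, _, _⟩; linarith)]
    norm_num [tv]
  · rw [if_neg (by rintro ⟨_, _, _, _⟩; linarith),
      if_pos ⟨by linarith, by linarith, by linarith, by linarith⟩]
    norm_num

lemma dySq_succ_subset (n i j : ℕ) : dySq (n+1) i j ⊆ dySq n (i/2) (j/2) := by
  have key : ∀ (i : ℕ) (a : ℝ), (i : ℝ)/2^(n+1) ≤ a → a < ((i : ℝ)+1)/2^(n+1) →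
      ((i/2 : ℕ) : ℝ)/2^n ≤ a ∧ a < (((i/2 : ℕ) : ℝ)+1)/2^n := by
    intro i a h1 h2
    have hN : (0:ℝ) < 2^n := by positivity
    have hN' : (0:ℝ) < 2^(n+1) := by positivity
    rw [div_le_iff₀ hN'] at h1
    rw [lt_div_iff₀ hN'] at h2
    rw [div_le_iff₀ hN, lt_div_iff₀ hN]
    have e1 : 2 * ((i/2 : ℕ) : ℝ) ≤ i := by exact_mod_cast (by omega : 2 * (i/2) ≤ i)
    have e2 : (i : ℝ) + 1 ≤ 2 * ((i/2 : ℕ) : ℝ) + 2 := by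
      exact_mod_cast (by omega : i + 1 ≤ 2 * (i/2) + 2)
    rw [pow_succ] at h1 h2
    constructor <;> linarith
  rintro x ⟨h1, h2, h3, h4⟩
  have A := key i _ h1 h2
  have B := key j _ h3 h4
  exact ⟨A.1, A.2, B.1, B.2⟩

/-- On each dyadic square of side `2^{-n}`, the map `chaconU n` is the translation prescribed by
`cellMap n`. -/
lemma chaconU_eq (n : ℕ) : ∀ (x : T2) (p : ℕ × ℕ), p.1 < 2^n ∧ p.2 < 2^n → x ∈ dySq n p.1 p.2 →
    chaconU n x = x + shift n p (cellMap n p) := by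
  induction n using Nat.strong_induction_on with
  | _ n ih =>
  match n, ih with
  | 0, _ =>
    intro x p _ _
    simp [chaconU, cellMap, shift_self]
  | 1, _ => exact fun x p hp hx => chaconU_one_eq hp hx
  | (n+2), ih =>
    rintro x ⟨i, j⟩ ⟨hi, hj⟩ hx
    have hrec := ih (n+1) (by omega) x (i/2, j/2)
      ⟨by simp only [pow_succ] at hi ⊢; omega, by simp only [pow_succ] at hj ⊢; omega⟩
      (dySq_succ_subset _ _ _ hx)
    obtain ⟨h1, h2, h3, h4⟩ := hx
    have hN4 : 4 ≤ 2^(n+2) := by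
      have := Nat.one_le_two_pow (n := n)
      rw [pow_add]; omega
    simp only at hi hj
    unfold chaconU
    simp only [cellMap, shift] at hrec ⊢
    rw [hrec]
    have e2 : (2:ℝ)^(n+1) = 2^(n+2) / 2 := by rw [pow_succ (2:ℝ) (n+1)]; ring
    rw [e2]
    have hNr : ((2^(n+2) : ℕ) : ℝ) = 2^(n+2) := by push_cast; rfl
    rw [← hNr] at h1 h2 h3 h4 ⊢
    generalize 2^(n+2) = N at *
    clear hrec ih e2 hNr
    have hNpos : (0:ℝ) < N := by positivity
    obtain ⟨s, hs⟩ : ∃ s : ℝ, s = 1 / N := ⟨_, rfl⟩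
    have hs0 : 0 < s := by rw [hs]; positivity
    have hNs : (N : ℝ) * s = 1 := by rw [hs]; field_simp
    have hdiv : ∀ t : ℝ, t / N = t * s := by intro t; rw [hs]; ring
    have hdiv2 : ∀ t : ℝ, t / ((N : ℝ) / 2) = 2 * t * s := by intro t; rw [hs]; field_simp
    rw [← hs]
    simp only [hdiv, hdiv2] at h1 h2 h3 h4 ⊢
    clear hdiv hdiv2 hs
    generalize rep x.1 = a at *
    generalize rep x.2 = b at *
    have ga := fun (k : ℤ) {c : ℝ} => grid_iff hs0 h1 h2 k (c := c)
    have gb := fun (k : ℤ) {c : ℝ} => grid_iff hs0 h3 h4 k (c := c)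
    have a4 := ga (N - 4) (c := 1 - 4*s) (by push_cast; linarith)
    have a3 := ga (N - 3) (c := 1 - 3*s) (by push_cast; linarith)
    have a2 := ga (N - 2) (c := 1 - 2*s) (by push_cast; linarith)
    have a1 := ga (N - 1) (c := 1 - s) (by push_cast; linarith)
    have a0 := ga N (c := 1) (by push_cast; linarith)
    have b0 := gb 0 (c := 0) (by simp)
    have b1 := gb 1 (c := s) (by simp)
    have b2 := gb 2 (c := 2*s) (by simp)
    simp only [a4, a3, a2, a1, a0, b0, b1, b2]
    clear a4 a3 a2 a1 a0 b0 b1 b2 ga gb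
    have c1 : ((N:ℤ) - 4 ≤ i ∧ (i:ℤ) < N - 3 ∧ 1 ≤ (j:ℤ) ∧ (j:ℤ) < 2) ↔ (i + 4 = N ∧ j = 1) := by
      omega
    have c2 : ((N:ℤ) - 3 ≤ i ∧ (i:ℤ) < N - 2 ∧ 1 ≤ (j:ℤ) ∧ (j:ℤ) < 2) ↔ (i + 3 = N ∧ j = 1) := by
      omega
    have c3 : ((N:ℤ) - 4 ≤ i ∧ (i:ℤ) < N - 3 ∧ 0 ≤ (j:ℤ) ∧ (j:ℤ) < 1) ↔ (i + 4 = N ∧ j = 0) := by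
      omega
    have c4 : ((N:ℤ) - 3 ≤ i ∧ (i:ℤ) < N - 2 ∧ 0 ≤ (j:ℤ) ∧ (j:ℤ) < 1) ↔ (i + 3 = N ∧ j = 0) := by
      omega
    have c5 : ((N:ℤ) - 2 ≤ i ∧ (i:ℤ) < N ∧ 1 ≤ (j:ℤ) ∧ (j:ℤ) < 2) ↔ (N ≤ i + 2 ∧ j = 1) := by
      omega
    have c6 : ((N:ℤ) - 2 ≤ i ∧ (i:ℤ) < N - 1 ∧ 0 ≤ (j:ℤ) ∧ (j:ℤ) < 1) ↔ (i + 2 = N ∧ j = 0) := by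
      omega
    have c7 : ((N:ℤ) - 1 ≤ i ∧ (i:ℤ) < N ∧ 0 ≤ (j:ℤ) ∧ (j:ℤ) < 1) ↔ (i + 1 = N ∧ j = 0) := by
      omega
    simp only [c1, c2, c3, c4, c5, c6, c7]
    clear c1 c2 c3 c4 c5 c6 c7
    generalize cellMap (n+1) (i/2, j/2) = q
    have hN1 : ((N - 1 : ℕ) : ℝ) = N - 1 := by rw [Nat.cast_sub (by omega)]; simp
    have hN2 : ((N - 2 : ℕ) : ℝ) = N - 2 := by rw [Nat.cast_sub (by omega)]; simp
    split_ifs with d1 d2 d3 d4 d5 d6 d7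
    · have hi' : (i : ℝ) = N - 4 := by rw [← d1.1]; push_cast; ring
      rw [d1.2, hN1, hi']
      congr 2 <;> push_cast <;> linarith
    · rw [d2.2]
      congr 2 <;> push_cast <;> ring
    · rw [d3.2]
      congr 2 <;> push_cast <;> ring
    · rw [d4.2]
      congr 2 <;> push_cast <;> ring
    · rw [d5.2, hN2, Nat.cast_sub d5.1]
      congr 2 <;> push_cast <;> linarith
    · have hi' : (i : ℝ) = N - 2 := by rw [← d6.1]; push_cast; ring
      rw [d6.2, hN1, hi']
      congr 2 <;> push_cast <;> linarith
    · simp [tv]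
    · have ei : (i : ℝ) = 2 * ((i/2 : ℕ) : ℝ) + ((i % 2 : ℕ) : ℝ) := by
        exact_mod_cast (by omega : i = 2 * (i/2) + i % 2)
      have ej : (j : ℝ) = 2 * ((j/2 : ℕ) : ℝ) + ((j % 2 : ℕ) : ℝ) := by
        exact_mod_cast (by omega : j = 2 * (j/2) + j % 2)
      congr 2
      · rw [Nat.cast_add, Nat.cast_mul]
        generalize ((i/2 : ℕ) : ℝ) = u at *
        rw [ei]; push_cast; ring
      · rw [Nat.cast_add, Nat.cast_mul]
        generalize ((j/2 : ℕ) : ℝ) = u at *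
        rw [ej]; push_cast; ring

/-! ### The index map is a single cycle -/

lemma cellMap_last (n : ℕ) (hn : 1 ≤ n) : cellMap n (2^n - 2, 0) = (0, 2^n - 1) := by
  match n, hn with
  | 1, _ => simp [cellMap]
  | (n+2), _ =>
    have hN4 : 4 ≤ 2^(n+2) := by
      have := Nat.one_le_two_pow (n := n)
      rw [pow_add]; omega
    simp only [cellMap]
    generalize 2^(n+2) = N at *
    rw [if_neg (by omega), if_neg (by omega), if_neg (by omega), if_neg (by omega),
      if_neg (by omega), if_pos (by simp only [and_true]; omega)]

lemma cellMap_fixed (n : ℕ) (hn : 1 ≤ n) : cellMap n (2^n - 1, 0) = (2^n - 1, 0) := by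
  match n, hn with
  | 1, _ => simp [cellMap]
  | (n+2), _ =>
    have hN4 : 4 ≤ 2^(n+2) := by
      have := Nat.one_le_two_pow (n := n)
      rw [pow_add]; omega
    simp only [cellMap]
    generalize 2^(n+2) = N at *
    rw [if_neg (by omega), if_neg (by omega), if_neg (by omega), if_neg (by omega),
      if_neg (by omega), if_neg (by omega), if_pos (by simp only [and_true]; omega)]

/-- The index of the square reached from `S_1` after `m` steps. -/
def orbit (n m : ℕ) : ℕ × ℕ := (cellMap n)^[m] (0, 2^n - 1)

lemma orbit_zero (n : ℕ) : orbit n 0 = (0, 2^n - 1) := rfl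

lemma orbit_succ (n m : ℕ) : orbit n (m+1) = cellMap n (orbit n m) :=
  Function.iterate_succ_apply' _ _ _

/-- All level-`n` indices except that of `R_n`. -/
def box (n : ℕ) : Finset (ℕ × ℕ) :=
  (Finset.range (2^n) ×ˢ Finset.range (2^n)).erase (2^n - 1, 0)

lemma mem_box {n : ℕ} {p : ℕ × ℕ} :
    p ∈ box n ↔ p ≠ (2^n - 1, 0) ∧ p.1 < 2^n ∧ p.2 < 2^n := by
  simp [box]

lemma card_box (n : ℕ) : (box n).card = 4^n - 1 := by
  have h : (2^n - 1, 0) ∈ Finset.range (2^n) ×ˢ Finset.range (2^n) := by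
    have := Nat.one_le_two_pow (n := n)
    simp
  rw [box, Finset.card_erase_of_mem h, Finset.card_product, Finset.card_range, ← mul_pow]
  norm_num

/-- The orbit of `S_1` fills `box n` at the times `m < 4^n - 1`, and at the last of
these times it is at index `(2^n - 2, 0)`. -/
def Covers (n : ℕ) : Prop :=
  (∀ p ∈ box n, ∃ m, m < 4^n - 1 ∧ orbit n m = p) ∧ orbit n (4^n - 2) = (2^n - 2, 0)

/-- By counting, an orbit covering `box n` in `4^n - 1` steps stays inside it. -/
lemma Covers.image_eq {n : ℕ} (h : Covers n) :
    (Finset.range (4^n - 1)).image (orbit n) = box n := by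
  symm
  apply Finset.eq_of_subset_of_card_le
  · intro p hp
    obtain ⟨m, hm, rfl⟩ := h.1 p hp
    exact Finset.mem_image_of_mem _ (Finset.mem_range.2 hm)
  · rw [card_box]
    exact Finset.card_image_le.trans (by simp)

lemma Covers.mem {n m : ℕ} (h : Covers n) (hm : m < 4^n - 1) : orbit n m ∈ box n := by
  rw [← h.image_eq]
  exact Finset.mem_image_of_mem _ (Finset.mem_range.2 hm)

lemma Covers.inj {n a b : ℕ} (h : Covers n) (ha : a < 4^n - 1) (hb : b < 4^n - 1)
    (hab : orbit n a = orbit n b) : a = b := by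
  have : Set.InjOn (orbit n) (Finset.range (4^n - 1)) := by
    rw [← Finset.card_image_iff, h.image_eq, card_box, Finset.card_range]
  exact this (by simpa using ha) (by simpa using hb) hab

lemma covers_one : Covers 1 := by
  refine ⟨?_, by simp [orbit, cellMap]⟩
  rintro ⟨i, j⟩ hp
  rw [mem_box] at hp
  obtain ⟨h0, hi, hj⟩ := hp
  simp only [pow_one] at h0 hi hj
  interval_cases i <;> interval_cases j
  · exact ⟨2, by norm_num, by simp [orbit, cellMap]⟩
  · exact ⟨0, by norm_num, by simp [orbit]⟩
  · simp at h0
  · exact ⟨1, by norm_num, by simp [orbit, cellMap]⟩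

lemma cellMap_double {n : ℕ} {q : ℕ × ℕ} {a b : ℕ} (ha : a < 2) (hb : b < 2)
    (h1 : q ∈ box (n+1)) (h2 : q ≠ (2^(n+1) - 2, 0)) :
    cellMap (n+2) (2*q.1 + a, 2*q.2 + b) =
      (2*(cellMap (n+1) q).1 + a, 2*(cellMap (n+1) q).2 + b) := by
  obtain ⟨i, j⟩ := q
  obtain ⟨h0, hi, hj⟩ := mem_box.1 h1
  have hN : 2^(n+2) = 2 * 2^(n+1) := by rw [pow_succ (n := n+1)]; ring
  have hp : 1 ≤ 2^(n+1) := Nat.one_le_two_pow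
  simp only [cellMap, hN]
  have ei : (2*i + a)/2 = i := by omega
  have ej : (2*j + b)/2 = j := by omega
  have fi : (2*i + a)%2 = a := by omega
  have fj : (2*j + b)%2 = b := by omega
  simp only [ei, ej, fi, fj]
  simp only [ne_eq, Prod.mk.injEq, not_and] at h0 h2 hi hj
  generalize 2^(n+1) = M at *
  rw [if_neg (by omega), if_neg (by omega), if_neg (by omega), if_neg (by omega),
    if_neg (by omega), if_neg (by omega), if_neg (by omega)]

/-- Each of the four quarters of `S_1` climbs the level-`(n+1)` tower along with `S_1`, until the
last square is reached. -/
lemma iterate_double {n a b : ℕ} (h : Covers (n+1)) (ha : a < 2) (hb : b < 2) (m : ℕ)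
    (hm : m < 4^(n+1) - 1) :
    (cellMap (n+2))^[m] (a, 2*(2^(n+1) - 1) + b) =
      (2*(orbit (n+1) m).1 + a, 2*(orbit (n+1) m).2 + b) := by
  induction m with
  | zero => simp [orbit]
  | succ m ih =>
    rw [Function.iterate_succ_apply', ih (by omega), orbit_succ]
    refine cellMap_double ha hb (h.mem (by omega)) fun e => ?_
    have := h.inj (by omega) (by omega) (e.trans h.2.symm)
    omega

lemma iterate_trans {α : Type*} {f : α → α} {x y z : α} {m k : ℕ} (h1 : f^[m] x = y)
    (h2 : f^[k] y = z) : f^[m+k] x = z := by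
  rw [add_comm, Function.iterate_add_apply, h1, h2]

/-- The level-`(n+2)` orbit runs through the four columns of the level-`(n+1)` tower in the order
top-left, top-right, bottom-left, bottom-right. The square `(N-2,1)` is inserted after the second
column, `(N-1,1)` after the third and `(N-2,0)` after the fourth. -/
lemma covers_succ {n : ℕ} (h : Covers (n+1)) : Covers (n+2) := by
  have hL : 4^(n+2) = 4 * 4^(n+1) := by rw [pow_succ (n := n+1)]; ring
  have hL4 : 4 ≤ 4^(n+1) := by
    have := Nat.one_le_pow n 4 (by norm_num)
    rw [pow_succ]; omega
  have hN : 2^(n+2) = 2 * 2^(n+1) := by rw [pow_succ (n := n+1)]; ring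
  have hM : 2 ≤ 2^(n+1) := by
    have := Nat.one_le_two_pow (n := n)
    rw [pow_succ]; omega
  have climb : ∀ a b, a < 2 → b < 2 → ∀ m, m < 4^(n+1) - 1 → _ :=
    fun a b ha hb m hm => iterate_double h ha hb m hm
  have hlast := h.2
  have hcov := h.1
  have hstep : ∀ p, cellMap (n+2) p = _ := fun p => by rw [cellMap]
  have hsq : ∀ m, orbit (n+2) m = (cellMap (n+2))^[m] (0, 2^(n+2) - 1) := fun _ => rfl
  unfold Covers
  simp only [mem_box] at hcov ⊢
  rw [hN] at *
  generalize 4^(n+1) = L at *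
  generalize 2^(n+1) = M at *
  rw [hL]
  clear hL hN
  -- the jumps out of the tops of the columns and through the three inserted squares
  have j1 : cellMap (n+2) (2*(M-2), 1) = (1, 2*(M-1)+1) := by
    rw [hstep, if_pos (by simp only [and_true]; omega)]
    simp only [Prod.mk.injEq, true_and, and_true]; omega
  have j2 : cellMap (n+2) (2*(M-2)+1, 1) = (2*M-2, 1) := by
    rw [hstep, if_neg (by simp only; omega), if_pos (by simp only [and_true]; omega)]
    simp only [Prod.mk.injEq, true_and, and_true]; omega
  have j3 : cellMap (n+2) (2*M-2, 1) = (0, 2*(M-1)) := by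
    rw [hstep, if_neg (by simp only; omega), if_neg (by simp only; omega),
      if_neg (by simp only; omega), if_neg (by simp only; omega), if_pos (by simp only [and_true]; omega)]
    simp only [Prod.mk.injEq, true_and, and_true]; omega
  have j4 : cellMap (n+2) (2*(M-2), 0) = (2*M-1, 1) := by
    rw [hstep, if_neg (by simp only; omega), if_neg (by simp only; omega),
      if_pos (by simp only [and_true]; omega)]
    simp only [Prod.mk.injEq, true_and, and_true]; omega
  have j5 : cellMap (n+2) (2*M-1, 1) = (1, 2*(M-1)) := by
    rw [hstep, if_neg (by simp only; omega), if_neg (by simp only; omega),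
      if_neg (by simp only; omega), if_neg (by simp only; omega), if_pos (by simp only [and_true]; omega)]
    simp only [Prod.mk.injEq, true_and, and_true]; omega
  have j6 : cellMap (n+2) (2*(M-2)+1, 0) = (2*M-2, 0) := by
    rw [hstep, if_neg (by simp only; omega), if_neg (by simp only; omega),
      if_neg (by simp only; omega), if_pos (by simp only [and_true]; omega)]
    simp only [Prod.mk.injEq, true_and, and_true]; omega
  clear hstep
  generalize cellMap (n+2) = f at *
  have one : ∀ {x y : ℕ × ℕ}, f x = y → f^[1] x = y := fun h => h
  have top : ∀ a b, a < 2 → b < 2 → f^[L-2] (a, 2*(M-1)+b) = (2*(M-2)+a, b) := by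
    intro a b ha hb
    rw [climb a b ha hb _ (by omega), hlast]
    simp
  -- the times at which the orbit enters the columns and the inserted squares
  have t01 : f^[0] (0, 2*M-1) = (0, 2*(M-1)+1) := by
    simp only [Function.iterate_zero, id, Prod.mk.injEq, true_and]; omega
  have t11 := iterate_trans (iterate_trans t01 (top 0 1 (by omega) (by omega))) (one j1)
  have t2 := iterate_trans (iterate_trans t11 (top 1 1 (by omega) (by omega))) (one j2)
  have t00 := iterate_trans t2 (one j3)
  have t3 := iterate_trans (iterate_trans t00 (top 0 0 (by omega) (by omega))) (one j4)
  have t10 := iterate_trans t3 (one j5)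
  have t4 := iterate_trans (iterate_trans t10 (top 1 0 (by omega) (by omega))) (one j6)
  simp only [hsq]
  refine ⟨?_, ?_⟩
  · rintro ⟨i, j⟩ ⟨h0, hi, hj⟩
    simp only [ne_eq, Prod.mk.injEq, not_and] at h0 hi hj
    by_cases hR : i/2 = M - 1 ∧ j/2 = 0
    · by_cases hj1 : j = 1
      · by_cases hi2 : i = 2*M-2
        · exact ⟨_, by omega, t2.trans (by rw [hi2, hj1])⟩
        · exact ⟨_, by omega, t3.trans (by simp only [Prod.mk.injEq, true_and, and_true]; omega)⟩
      · exact ⟨_, by omega, t4.trans (by simp only [Prod.mk.injEq, true_and, and_true]; omega)⟩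
    · obtain ⟨m, hm, hq⟩ := hcov (i/2, j/2) ⟨by simpa using hR, by simp only; omega,
        by simp only; omega⟩
      have cl : ∀ a b, a < 2 → b < 2 → i % 2 = a → j % 2 = b →
          f^[m] (a, 2*(M-1)+b) = (i, j) := by
        intro a b ha hb ea eb
        rw [climb a b ha hb m hm, hq]
        simp only [Prod.mk.injEq, true_and, and_true]; omega
      rcases Nat.mod_two_eq_zero_or_one i with ea | ea <;>
        rcases Nat.mod_two_eq_zero_or_one j with eb | eb
      · exact ⟨_, by omega, iterate_trans t00 (cl 0 0 (by omega) (by omega) ea eb)⟩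
      · exact ⟨_, by omega, iterate_trans t01 (cl 0 1 (by omega) (by omega) ea eb)⟩
      · exact ⟨_, by omega, iterate_trans t10 (cl 1 0 (by omega) (by omega) ea eb)⟩
      · exact ⟨_, by omega, iterate_trans t11 (cl 1 1 (by omega) (by omega) ea eb)⟩
  · convert t4 using 2
    omega

lemma covers (n : ℕ) : Covers (n+1) := by
  induction n with
  | zero => exact covers_one
  | succ n ih => exact covers_succ ih

lemma orbit_period {n : ℕ} (hn : 1 ≤ n) (h : Covers n) : orbit n (4^n - 1) = orbit n 0 := by
  have h4 : 2 ≤ 4^n := by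
    calc 2 ≤ 4^1 := by norm_num
      _ ≤ 4^n := Nat.pow_le_pow_right (by norm_num) hn
  rw [show 4^n - 1 = (4^n - 2) + 1 by omega, orbit_succ, h.2, cellMap_last n hn, orbit_zero]

lemma cellMap_iterate {n : ℕ} (hn : 1 ≤ n) (h : Covers n) {p : ℕ × ℕ}
    (hp : p.1 < 2^n ∧ p.2 < 2^n) : (cellMap n)^[4^n - 1] p = p := by
  by_cases hR : p = (2^n - 1, 0)
  · subst hR
    exact Function.iterate_fixed (cellMap_fixed n hn) _
  · obtain ⟨m, hm, rfl⟩ := h.1 p (mem_box.2 ⟨hR, hp⟩)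
    have e := orbit_period hn h
    simp only [orbit] at e ⊢
    rw [← Function.iterate_add_apply, add_comm, Function.iterate_add_apply, e,
      Function.iterate_zero, id]

lemma cellMap_mem {n : ℕ} (hn : 1 ≤ n) (h : Covers n) {p : ℕ × ℕ}
    (hp : p.1 < 2^n ∧ p.2 < 2^n) : (cellMap n p).1 < 2^n ∧ (cellMap n p).2 < 2^n := by
  by_cases hR : p = (2^n - 1, 0)
  · rw [hR, cellMap_fixed n hn, ← hR]
    exact hp
  · obtain ⟨m, hm, rfl⟩ := h.1 p (mem_box.2 ⟨hR, hp⟩)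
    rw [← orbit_succ]
    by_cases hm' : m + 1 < 4^n - 1
    · exact (mem_box.1 (h.mem hm')).2
    · rw [show m + 1 = 4^n - 1 by omega, orbit_period hn h]
      exact (mem_box.1 (h.mem (by omega))).2

/-! ### Back to the torus -/

lemma mapsByTranslation_cell {n : ℕ} {p : ℕ × ℕ} (hp : p.1 < 2^n ∧ p.2 < 2^n)
    (hq : (cellMap n p).1 < 2^n ∧ (cellMap n p).2 < 2^n) :
    MapsByTranslation (chaconU n) (dySq n p.1 p.2)
      (dySq n (cellMap n p).1 (cellMap n p).2) := by
  refine ⟨⟨_, fun x hx => chaconU_eq n x p hp hx⟩, ?_⟩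
  ext y
  constructor
  · rintro ⟨x, hx, rfl⟩
    rw [chaconU_eq n x p hp hx]
    exact add_shift_mem hq hx
  · intro hy
    have hx := add_shift_mem hp hy
    refine ⟨_, hx, ?_⟩
    rw [chaconU_eq n _ p hp hx, add_assoc, shift_add, shift_self, add_zero]

lemma chaconU_iterate {n : ℕ} (hn : 1 ≤ n) (h : Covers n) (x : T2) :
    (chaconU n)^[4^n - 1] x = x := by
  obtain ⟨p, hp, hx⟩ := exists_mem_dySq n x
  have key : ∀ m : ℕ, (((cellMap n)^[m] p).1 < 2^n ∧ ((cellMap n)^[m] p).2 < 2^n) ∧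
      (chaconU n)^[m] x = x + shift n p ((cellMap n)^[m] p) := by
    intro m
    induction m with
    | zero => exact ⟨hp, by simp [shift_self]⟩
    | succ m ih =>
      rw [Function.iterate_succ_apply', Function.iterate_succ_apply', ih.2]
      refine ⟨cellMap_mem hn h ih.1, ?_⟩
      rw [chaconU_eq n _ _ ih.1 (add_shift_mem ih.1 hx), add_assoc, shift_add]
  rw [(key _).2, cellMap_iterate hn h hp, shift_self, add_zero]

/-- All level-`n` indices. -/
def fullBox (n : ℕ) : Finset (ℕ × ℕ) := Finset.range (2^n) ×ˢ Finset.range (2^n)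

lemma mem_fullBox {n : ℕ} {p : ℕ × ℕ} : p ∈ fullBox n ↔ p.1 < 2^n ∧ p.2 < 2^n := by
  simp [fullBox]

lemma chaconU_preimage (n : ℕ) (A : Set T2) :
    chaconU n ⁻¹' A = ⋃ p ∈ fullBox n,
      dySq n p.1 p.2 ∩ (fun x => x + shift n p (cellMap n p)) ⁻¹' A := by
  ext x
  simp only [mem_iUnion, mem_inter_iff, mem_preimage, exists_prop]
  constructor
  · intro hA
    obtain ⟨p, hp, hx⟩ := exists_mem_dySq n x
    exact ⟨p, mem_fullBox.2 hp, hx, by rwa [← chaconU_eq n x p hp hx]⟩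
  · rintro ⟨p, hp, hx, hA⟩
    rwa [chaconU_eq n x p (mem_fullBox.1 hp) hx]

lemma measurable_chaconU (n : ℕ) : Measurable (chaconU n) := by
  intro A hA
  rw [chaconU_preimage]
  refine Finset.measurableSet_biUnion _ fun p _ => (measurableSet_dySq _ _ _).inter ?_
  exact (measurable_add_const _) hA

lemma pairwise_dySq (n : ℕ) (B : ℕ × ℕ → Set T2) :
    (↑(fullBox n) : Set (ℕ × ℕ)).PairwiseDisjoint fun p => dySq n p.1 p.2 ∩ B p := by
  intro p _ q _ hpq
  refine Set.disjoint_left.2 fun x hx hy => hpq ?_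
  exact dySq_index_unique hx.1 hy.1

/-- Cutting along the dyadic squares, both measures are the sum over `q` of the measure of the part
of `A` in the square `q`, since each square is translated and the squares are permuted. -/
lemma volume_chaconU_preimage {n : ℕ} (hn : 1 ≤ n) (h : Covers n) {A : Set T2}
    (hA : MeasurableSet A) : volume (chaconU n ⁻¹' A) = volume A := by
  have : (volume : Measure T2).IsAddRightInvariant := by
    rw [Measure.volume_eq_prod]
    infer_instance
  have hmaps : Set.MapsTo (cellMap n) (fullBox n) (fullBox n) := fun p hp =>
    mem_fullBox.2 (cellMap_mem hn h (mem_fullBox.1 hp))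
  have hinj : Set.InjOn (cellMap n) (fullBox n) := by
    intro p hp q hq e
    have h1 : 4^n - 1 = (4^n - 2) + 1 := by
      have : 4^1 ≤ 4^n := Nat.pow_le_pow_right (by norm_num) hn
      omega
    rw [← cellMap_iterate hn h (mem_fullBox.1 hp), ← cellMap_iterate hn h (mem_fullBox.1 hq), h1,
      Function.iterate_succ_apply, Function.iterate_succ_apply, e]
  have hcut : A = ⋃ q ∈ fullBox n, dySq n q.1 q.2 ∩ A := by
    ext x
    simp only [mem_iUnion, mem_inter_iff, exists_prop]
    constructor
    · intro hx
      obtain ⟨p, hp, hxp⟩ := exists_mem_dySq n x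
      exact ⟨p, mem_fullBox.2 hp, hxp, hx⟩
    · rintro ⟨p, _, _, hx⟩
      exact hx
  have hpiece : ∀ p ∈ fullBox n,
      volume (dySq n p.1 p.2 ∩ (fun x => x + shift n p (cellMap n p)) ⁻¹' A) =
        volume (dySq n (cellMap n p).1 (cellMap n p).2 ∩ A) := by
    intro p hp
    rw [← measure_preimage_add_right volume (shift n p (cellMap n p))
      (dySq n (cellMap n p).1 (cellMap n p).2 ∩ A), preimage_inter]
    congr 2
    ext x
    refine ⟨fun hx => add_shift_mem (mem_fullBox.1 (hmaps hp)) hx, fun hx => ?_⟩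
    have := add_shift_mem (mem_fullBox.1 hp) hx
    rwa [add_assoc, shift_add, shift_self, add_zero] at this
  rw [chaconU_preimage, measure_biUnion_finset (pairwise_dySq n _) fun p _ =>
    (measurableSet_dySq _ _ _).inter ((measurable_add_const _) hA)]
  conv_rhs => rw [hcut]
  rw [measure_biUnion_finset (pairwise_dySq n _) fun p _ => (measurableSet_dySq _ _ _).inter hA,
    Finset.sum_congr rfl hpiece]
  exact Finset.sum_nbij (cellMap n) hmaps hinj
    (Finset.surjOn_of_injOn_of_card_le _ hmaps hinj le_rfl) fun _ _ => rfl

/-- The inverse of `chaconU n` is its `(4^n - 2)`-th iterate. -/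
lemma isAutomorphism_chaconU {n : ℕ} (hn : 1 ≤ n) (h : Covers n) :
    IsAutomorphism (chaconU n) := by
  have h1 : 4^n - 1 = (4^n - 2) + 1 := by
    have : 4^1 ≤ 4^n := Nat.pow_le_pow_right (by norm_num) hn
    omega
  refine ⟨measurable_chaconU n, (chaconU n)^[4^n - 2], (measurable_chaconU n).iterate _,
    .of_forall fun x => ?_, .of_forall fun x => ?_, fun A hA => volume_chaconU_preimage hn h hA⟩
  · rw [← Function.iterate_succ_apply, Nat.succ_eq_add_one, ← h1, chaconU_iterate hn h]
  · rw [← Function.iterate_succ_apply' (chaconU n), Nat.succ_eq_add_one, ← h1,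
      chaconU_iterate hn h]

/-- For every `n ≥ 1`, the Chacon-type map `U_n` is an automorphism of the torus and a
cyclic permutation (by translations) of the `4^n - 1` dyadic squares of side `2^{-n}`
other than `R_n = [1-2^{-n},1) × [0,2^{-n})`, starting at `S_1 = [0,2^{-n}) × [1-2^{-n},1)`,
and is the identity on `R_n`. -/
theorem chaconU_cyclic_permutation (n : ℕ) (hn : 1 ≤ n) :
    IsAutomorphism (chaconU n) ∧
    ∃ σ : ℕ → ℕ × ℕ,
      (∀ a, a < 4^n - 1 → ∀ b, b < 4^n - 1 → σ a = σ b → a = b) ∧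
      (∀ m, m < 4^n - 1 → (σ m).1 < 2^n ∧ (σ m).2 < 2^n ∧ σ m ≠ (2^n - 1, 0)) ∧
      (∀ p : ℕ × ℕ, p.1 < 2^n → p.2 < 2^n → p ≠ (2^n - 1, 0) →
        ∃ m, m < 4^n - 1 ∧ σ m = p) ∧
      σ 0 = (0, 2^n - 1) ∧
      (∀ m, m + 1 < 4^n - 1 →
        MapsByTranslation (chaconU n) (dySq n (σ m).1 (σ m).2)
          (dySq n (σ (m+1)).1 (σ (m+1)).2)) ∧
      MapsByTranslation (chaconU n) (dySq n (σ (4^n - 2)).1 (σ (4^n - 2)).2)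
        (dySq n (σ 0).1 (σ 0).2) ∧
      (∀ x ∈ dySq n (2^n - 1) 0, chaconU n x = x) := by
  have h : Covers n := by
    obtain ⟨k, rfl⟩ : ∃ k, n = k + 1 := ⟨n - 1, by omega⟩
    exact covers k
  have h4 : 4^1 ≤ 4^n := Nat.pow_le_pow_right (by norm_num) hn
  have hmaps : ∀ m, m < 4^n - 1 →
      MapsByTranslation (chaconU n) (dySq n (orbit n m).1 (orbit n m).2)
        (dySq n (orbit n (m+1)).1 (orbit n (m+1)).2) := by
    intro m hm
    have hp := (mem_box.1 (h.mem hm)).2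
    rw [orbit_succ]
    exact mapsByTranslation_cell hp (cellMap_mem hn h hp)
  refine ⟨isAutomorphism_chaconU hn h, orbit n, fun a ha b hb => h.inj ha hb, ?_, ?_, rfl,
    fun m hm => hmaps m (by omega), ?_, ?_⟩
  · intro m hm
    obtain ⟨h0, h1, h2⟩ := mem_box.1 (h.mem hm)
    exact ⟨h1, h2, h0⟩
  · exact fun p h1 h2 h0 => h.1 p (mem_box.2 ⟨h0, h1, h2⟩)
  · have := hmaps (4^n - 2) (by omega)
    rwa [show 4^n - 2 + 1 = 4^n - 1 by omega, orbit_period hn h] at this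
  · intro x hx
    have hN : 1 ≤ 2^n := Nat.one_le_two_pow
    rw [chaconU_eq n x (2^n - 1, 0) ⟨by simp only; omega, by simp only; omega⟩ hx,
      cellMap_fixed n hn, shift_self, add_zero]

end
end

section
/- For every n ≥ 2, with k = 2^n, the Chacon-type map U_n decomposes as U_n(x) = U_{n−1}(V_n(x)) for μ-a.e. x ∈ T², where V_n is the composition of movement maps at grid scale k given by V_n = E(k,k−3; k,k−2) ∘ R⁺(k,k−3) ∘ R⁺(k,k−3) ∘ S_c(k−1; k−3,k) ∘ S_c(k−1; k−3,k) ∘ R⁻(k,k−3) ∘ S_c(k; k−3,k−1), the rightmost map being applied first. -/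
/-!
The identity holds at every point. Write a point as `cellPt k c r u v`: the cell in column `k - c`
and row `k - r`, together with the relative position `(u, v)` inside it (`exists_cellPt`). All
thresholds that matter are multiples of `1/k`, so the defining conditions of the maps become
conditions on `(c, r)` alone, and the movement maps change `(c, r)` while keeping `(u, v)`.

In these coordinates the composition `V_n` is a permutation of the eight cells `c < 4`, `r < 2`
(`moveV_cellPt`). On that block, `U_{n-1}` translates the left half by `(4/k - 1, 1 - 2/k)` and
fixes the right half (`chaconU_prev_cellPt`; the case `n - 1 = 1` comes from the separate formula
for `U_1`). Adding the translations gives the values of `U_n` (`chaconU_cellPt`) cell by cell.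
Off the block `V_n` is the identity and `U_n = U_{n-1}` by definition.
-/

open MeasureTheory Filter Set
open scoped ENNReal symmDiff

noncomputable section

/-- The grid cell `Q_{i,j} = [(j-1)/k, j/k) × [(k-i)/k, (k-i+1)/k)` (1-based indices,
`i` the row index from the top, `j` the column index from the left). -/
def cell (k i j : ℕ) : Set T2 :=
  {x : T2 | ((j : ℝ)-1)/k ≤ rep x.1 ∧ rep x.1 < (j : ℝ)/k ∧
            ((k : ℝ)-i)/k ≤ rep x.2 ∧ rep x.2 < ((k : ℝ)-i+1)/k}

open Classical in
/-- Simple exchange `E(i,j; i',j')`: swaps the cells `Q_{i,j}` and `Q_{i',j'}` by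
translations, identity elsewhere. -/
noncomputable def mvE (k i j i' j' : ℕ) : T2 → T2 := fun x =>
  if x ∈ cell k i j then x + tv (((j' : ℝ) - j)/k) (((i : ℝ) - i')/k)
  else if x ∈ cell k i' j' then x + tv (((j : ℝ) - j')/k) (((i' : ℝ) - i)/k)
  else x

open Classical in
/-- Sort `S_c(i; j,j')`: translates `Q_{i,j'}` onto `Q_{i,j}` and `Q_{i,l}` onto
`Q_{i,l+1}` for `j ≤ l ≤ j'-1`, identity elsewhere. -/
noncomputable def mvS (k i j j' : ℕ) : T2 → T2 := fun x =>
  if x ∈ cell k i j' then x + tv (((j : ℝ) - j')/k) 0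
  else if ((j : ℝ)-1)/k ≤ rep x.1 ∧ rep x.1 < ((j' : ℝ)-1)/k ∧
      ((k : ℝ)-i)/k ≤ rep x.2 ∧ rep x.2 < ((k : ℝ)-i+1)/k then x + tv (1/k) 0
  else x

open Classical in
/-- Counterclockwise rotation `R⁻(i,j)`: cyclically translates
`Q_{i-1,j} → Q_{i,j} → Q_{i,j+1} → Q_{i-1,j+1} → Q_{i-1,j}`, identity elsewhere. -/
noncomputable def mvRminus (k i j : ℕ) : T2 → T2 := fun x =>
  if x ∈ cell k (i-1) j then x + tv 0 (-(1/k))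
  else if x ∈ cell k i j then x + tv (1/k) 0
  else if x ∈ cell k i (j+1) then x + tv 0 (1/k)
  else if x ∈ cell k (i-1) (j+1) then x + tv (-(1/k)) 0
  else x

open Classical in
/-- Clockwise rotation `R⁺(i,j)`, the inverse of `R⁻(i,j)`: cyclically translates
`Q_{i,j} → Q_{i-1,j} → Q_{i-1,j+1} → Q_{i,j+1} → Q_{i,j}`, identity elsewhere. -/
noncomputable def mvRplus (k i j : ℕ) : T2 → T2 := fun x =>
  if x ∈ cell k i j then x + tv 0 (1/k)
  else if x ∈ cell k (i-1) j then x + tv (1/k) 0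
  else if x ∈ cell k (i-1) (j+1) then x + tv 0 (-(1/k))
  else if x ∈ cell k i (j+1) then x + tv (-(1/k)) 0
  else x

/-! ### Points in cell coordinates -/

/-- The point of the cell in column `k - c` (`c` counted from the right, starting at `0`) and
row `k - r` (`r` counted from the bottom, starting at `0`) whose position inside that cell,
rescaled to `[0,1)²`, is `(u, v)`. -/
def cellPt (k c r : ℕ) (u v : ℝ) : T2 := tv (((k : ℝ) - c - 1 + u) / k) (((r : ℝ) + v) / k)

/-- The indices and the relative position of `cellPt k c r u v` are admissible; the grid has at
least four columns, so that all movement maps of the decomposition make sense. -/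
structure Good (k c r : ℕ) (u v : ℝ) : Prop where
  hk : 4 ≤ k
  hc : c < k
  hr : r < k
  u0 : 0 ≤ u
  u1 : u < 1
  v0 : 0 ≤ v
  v1 : v < 1

/-- Every point of the torus is a `cellPt`. -/
lemma exists_cellPt (k : ℕ) (hk : 4 ≤ k) (x : T2) :
    ∃ c r u v, Good k c r u v ∧ x = cellPt k c r u v := by
  have hk0 : (0:ℝ) < k := by exact_mod_cast (by omega : 0 < k)
  have key : ∀ y : AddCircle (1:ℝ), ∃ m : ℕ, ∃ u : ℝ, m < k ∧ 0 ≤ u ∧ u < 1 ∧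
      y = (((m + u) / k : ℝ) : AddCircle (1:ℝ)) := by
    intro y
    obtain ⟨h0, h1⟩ := (AddCircle.equivIco (1:ℝ) 0 y).2
    have hy : ((AddCircle.equivIco (1:ℝ) 0 y : ℝ) : AddCircle (1:ℝ)) = y :=
      AddCircle.coe_equivIco
    generalize ((AddCircle.equivIco (1:ℝ) 0 y : ℝ)) = a at h0 h1 hy
    rw [zero_add] at h1
    have hak : 0 ≤ a * k := by positivity
    refine ⟨⌊a * k⌋₊, a * k - ⌊a * k⌋₊, ?_, ?_, ?_, ?_⟩
    · rw [Nat.floor_lt hak]; nlinarith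
    · linarith [Nat.floor_le hak]
    · linarith [Nat.lt_floor_add_one (a * k)]
    · rw [← hy]; congr 1; field_simp; ring
  obtain ⟨m, u, hm, hu0, hu1, h1⟩ := key x.1
  obtain ⟨r, v, hr, hv0, hv1, h2⟩ := key x.2
  refine ⟨k - 1 - m, r, u, v, ⟨hk, by omega, hr, hu0, hu1, hv0, hv1⟩, ?_⟩
  apply Prod.ext
  · rw [h1, cellPt, tv, Nat.sub_sub, Nat.cast_sub (by omega)]
    dsimp only
    congr 1
    push_cast
    ring
  · rw [h2, cellPt, tv]

namespace Good

variable {k c r : ℕ} {u v : ℝ}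

lemma k0 (h : Good k c r u v) : (0:ℝ) < k := by
  have := h.hk
  exact_mod_cast (by omega : 0 < k)

lemma rep_fst (h : Good k c r u v) : rep (cellPt k c r u v).1 = ((k : ℝ) - c - 1 + u) / k := by
  have h1 : (c : ℝ) + 1 ≤ k := by exact_mod_cast h.hc
  have hk := h.k0
  apply rep_coe
  · apply div_nonneg _ hk.le
    linarith [h.u0]
  · rw [div_lt_one hk]
    linarith [h.u1, (Nat.cast_nonneg c : (0:ℝ) ≤ c)]

lemma rep_snd (h : Good k c r u v) : rep (cellPt k c r u v).2 = ((r : ℝ) + v) / k := by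
  have h1 : (r : ℝ) + 1 ≤ k := by exact_mod_cast h.hr
  have hk := h.k0
  apply rep_coe
  · apply div_nonneg _ hk.le
    linarith [h.v0, (Nat.cast_nonneg r : (0:ℝ) ≤ r)]
  · rw [div_lt_one hk]
    linarith [h.v1]

lemma le_fst (h : Good k c r u v) (m : ℕ) {t : ℝ} (ht : t = ((k : ℝ) - m) / k) :
    t ≤ rep (cellPt k c r u v).1 ↔ c < m := by
  rw [h.rep_fst, ht, div_le_div_iff_of_pos_right h.k0]
  constructor
  · intro H
    have : (c : ℝ) < m := by linarith [h.u1]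
    exact_mod_cast this
  · intro H
    have : (c : ℝ) + 1 ≤ m := by exact_mod_cast H
    linarith [h.u0]

lemma snd_le (h : Good k c r u v) (m : ℕ) {t : ℝ} (ht : t = (m : ℝ) / k) :
    t ≤ rep (cellPt k c r u v).2 ↔ m ≤ r := by
  rw [h.rep_snd, ht, div_le_div_iff_of_pos_right h.k0]
  constructor
  · intro H
    have : (m : ℝ) < r + 1 := by linarith [h.v1]
    exact Nat.lt_succ_iff.mp (by exact_mod_cast this)
  · intro H
    have : (m : ℝ) ≤ r := by exact_mod_cast H
    linarith [h.v0]

lemma fst_lt (h : Good k c r u v) (m : ℕ) {t : ℝ} (ht : t = ((k : ℝ) - m) / k) :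
    rep (cellPt k c r u v).1 < t ↔ m ≤ c := by
  rw [← not_le, h.le_fst m ht, not_lt]

lemma snd_lt (h : Good k c r u v) (m : ℕ) {t : ℝ} (ht : t = (m : ℝ) / k) :
    rep (cellPt k c r u v).2 < t ↔ r < m := by
  rw [← not_le, h.snd_le m ht, not_le]

lemma mem_cell (h : Good k c r u v) {i j : ℕ} (c' r' : ℕ) (hi : i + r' = k) (hj : j + c' = k) :
    cellPt k c r u v ∈ cell k i j ↔ c = c' ∧ r = r' := by
  have hi' : (k : ℝ) = i + r' := by exact_mod_cast hi.symm
  have hj' : (k : ℝ) = j + c' := by exact_mod_cast hj.symm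
  unfold cell
  rw [mem_ofPred_eq, h.le_fst (c' + 1) (by push_cast; congr 1; linarith),
    h.fst_lt c' (by congr 1; linarith), h.snd_le r' (by congr 1; linarith),
    h.snd_lt (r' + 1) (by push_cast; congr 1; linarith)]
  omega

/-- Changing the cell keeps the data admissible. -/
lemma move (h : Good k c r u v) {c' r' : ℕ} (hc' : c' < 4) (hr' : r' < 2) :
    Good k c' r' u v :=
  ⟨h.hk, by have := h.hk; omega, by have := h.hk; omega, h.u0, h.u1, h.v0, h.v1⟩

end Good

/-! ### The movement maps in cell coordinates -/

section Moves

variable {k c r : ℕ} {u v : ℝ}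

lemma cellPt_add {a b : ℝ} (c' r' : ℕ)
    (ha : a = ((c : ℝ) - c') / k) (hb : b = ((r' : ℝ) - r) / k) :
    cellPt k c r u v + tv a b = cellPt k c' r' u v := by
  rw [cellPt, cellPt, tv_add, ha, hb]
  congr 1 <;> ring

lemma mvS_cellPt (h : Good k c r u v) {i j j' : ℕ} (r' c₁ c₂ : ℕ) (hi : i + r' = k)
    (hj : j + c₁ = k) (hj' : j' + c₂ = k) :
    mvS k i j j' (cellPt k c r u v) =
      if c = c₂ ∧ r = r' then cellPt k c₁ r u v
      else if c₂ < c ∧ c ≤ c₁ ∧ r = r' then cellPt k (c - 1) r u v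
      else cellPt k c r u v := by
  have hi1 : (k : ℝ) = i + r' := by exact_mod_cast hi.symm
  have hj1 : (k : ℝ) = j + c₁ := by exact_mod_cast hj.symm
  have hj2 : (k : ℝ) = j' + c₂ := by exact_mod_cast hj'.symm
  have t₁ : ((j : ℝ) - 1) / k = ((k : ℝ) - (c₁ + 1 : ℕ)) / k := by
    push_cast; congr 1; linarith
  have t₂ : ((j' : ℝ) - 1) / k = ((k : ℝ) - (c₂ + 1 : ℕ)) / k := by
    push_cast; congr 1; linarith
  have b₁ : ((k : ℝ) - i) / k = (r' : ℝ) / k := by congr 1; linarith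
  have b₂ : ((k : ℝ) - i + 1) / k = ((r' + 1 : ℕ) : ℝ) / k := by
    push_cast; congr 1; linarith
  unfold mvS
  simp only [h.mem_cell c₂ r' hi hj', h.le_fst _ t₁, h.fst_lt _ t₂, h.snd_le _ b₁,
    h.snd_lt _ b₂]
  split_ifs with h1 h2 h3 h4
  · refine cellPt_add c₁ r ?_ (by simp)
    rw [h1.1]; congr 1; linarith
  · refine cellPt_add (c - 1) r ?_ (by simp)
    rw [Nat.cast_sub (by omega)]; simp
  · omega
  · omega
  · rfl

lemma mvRminus_cellPt (h : Good k c r u v) :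
    mvRminus k k (k - 3) (cellPt k c r u v) =
      if c = 3 ∧ r = 1 then cellPt k 3 0 u v
      else if c = 3 ∧ r = 0 then cellPt k 2 0 u v
      else if c = 2 ∧ r = 0 then cellPt k 2 1 u v
      else if c = 2 ∧ r = 1 then cellPt k 3 1 u v
      else cellPt k c r u v := by
  have hk := h.hk
  unfold mvRminus
  rw [h.mem_cell 3 1 (by omega) (by omega), h.mem_cell 3 0 (by omega) (by omega),
    h.mem_cell 2 0 (by omega) (by omega), h.mem_cell 2 1 (by omega) (by omega)]
  split_ifs with h1 h2 h3 h4
  · exact cellPt_add _ _ (by rw [h1.1]; norm_num) (by rw [h1.2]; norm_num; ring)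
  · exact cellPt_add _ _ (by rw [h2.1]; norm_num) (by rw [h2.2]; norm_num)
  · exact cellPt_add _ _ (by rw [h3.1]; norm_num) (by rw [h3.2]; norm_num)
  · exact cellPt_add _ _ (by rw [h4.1]; norm_num; ring) (by rw [h4.2]; norm_num)
  · rfl

lemma mvRplus_cellPt (h : Good k c r u v) :
    mvRplus k k (k - 3) (cellPt k c r u v) =
      if c = 3 ∧ r = 0 then cellPt k 3 1 u v
      else if c = 3 ∧ r = 1 then cellPt k 2 1 u v
      else if c = 2 ∧ r = 1 then cellPt k 2 0 u v
      else if c = 2 ∧ r = 0 then cellPt k 3 0 u v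
      else cellPt k c r u v := by
  have hk := h.hk
  unfold mvRplus
  rw [h.mem_cell 3 0 (by omega) (by omega), h.mem_cell 3 1 (by omega) (by omega),
    h.mem_cell 2 1 (by omega) (by omega), h.mem_cell 2 0 (by omega) (by omega)]
  split_ifs with h1 h2 h3 h4
  · exact cellPt_add _ _ (by rw [h1.1]; norm_num) (by rw [h1.2]; norm_num)
  · exact cellPt_add _ _ (by rw [h2.1]; norm_num) (by rw [h2.2]; norm_num)
  · exact cellPt_add _ _ (by rw [h3.1]; norm_num) (by rw [h3.2]; norm_num; ring)
  · exact cellPt_add _ _ (by rw [h4.1]; norm_num; ring) (by rw [h4.2]; norm_num)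
  · rfl

lemma mvE_cellPt (h : Good k c r u v) :
    mvE k k (k - 3) k (k - 2) (cellPt k c r u v) =
      if c = 3 ∧ r = 0 then cellPt k 2 0 u v
      else if c = 2 ∧ r = 0 then cellPt k 3 0 u v
      else cellPt k c r u v := by
  have hk := h.hk
  unfold mvE
  rw [h.mem_cell 3 0 (by omega) (by omega), h.mem_cell 2 0 (by omega) (by omega)]
  rw [Nat.cast_sub (by omega : 3 ≤ k), Nat.cast_sub (by omega : 2 ≤ k)]
  split_ifs with h1 h2
  · exact cellPt_add _ _ (by rw [h1.1]; congr 1; push_cast; ring) (by rw [h1.2]; simp)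
  · exact cellPt_add _ _ (by rw [h2.1]; congr 1; push_cast; ring) (by rw [h2.2]; simp)
  · rfl

end Moves

/-! ### The maps `V_n`, `U_n` and `U_{n-1}` in cell coordinates -/

/-- The composition `V_n` of movement maps. -/
def moveV (k : ℕ) : T2 → T2 :=
  mvE k k (k-3) k (k-2) ∘
    mvRplus k k (k-3) ∘
    mvRplus k k (k-3) ∘
    mvS k (k-1) (k-3) k ∘
    mvS k (k-1) (k-3) k ∘
    mvRminus k k (k-3) ∘
    mvS k k (k-3) (k-1)

section Values

variable {k c r : ℕ} {u v : ℝ}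

/-- The permutation of the eight cells induced by `V_n`; all other cells are fixed. -/
lemma moveV_cellPt (h : Good k c r u v) :
    moveV k (cellPt k c r u v) =
      if c = 3 ∧ r = 1 then cellPt k 2 1 u v
      else if c = 2 ∧ r = 1 then cellPt k 1 1 u v
      else if c = 3 ∧ r = 0 then cellPt k 0 1 u v
      else if c = 2 ∧ r = 0 then cellPt k 1 0 u v
      else if c = 1 ∧ r = 1 then cellPt k 3 0 u v
      else if c = 0 ∧ r = 1 then cellPt k 2 0 u v
      else if c = 1 ∧ r = 0 then cellPt k 3 1 u v
      else cellPt k c r u v := by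
  have hk := h.hk
  have e1 : ∀ {c r : ℕ}, Good k c r u v → _ := fun {c r} (g : Good k c r u v) =>
    mvS_cellPt g (i := k) (j := k - 3) (j' := k - 1) 0 3 1 (by omega) (by omega) (by omega)
  have e2 : ∀ {c r : ℕ}, Good k c r u v → _ := fun {c r} (g : Good k c r u v) =>
    mvS_cellPt g (i := k - 1) (j := k - 3) (j' := k) 1 3 0 (by omega) (by omega) (by omega)
  have g : ∀ {c' r' : ℕ}, c' < 4 → r' < 2 → Good k c' r' u v := fun a b => h.move a b
  unfold moveV
  by_cases hin : c < 4 ∧ r < 2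
  · obtain ⟨hc, hr⟩ := hin
    interval_cases c <;> interval_cases r <;>
      simp [e1, e2, mvRminus_cellPt, mvRplus_cellPt, mvE_cellPt, g]
  · have E1 := e1 h
    have E2 := e2 h
    have E3 := mvRminus_cellPt h
    have E4 := mvRplus_cellPt h
    have E5 := mvE_cellPt h
    rw [if_neg (by omega), if_neg (by omega)] at E1 E2
    repeat rw [if_neg (by omega)] at E3
    repeat rw [if_neg (by omega)] at E4
    repeat rw [if_neg (by omega)] at E5
    repeat rw [if_neg (by omega)]
    simp only [Function.comp_apply, E1, E2, E3, E4, E5]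

/-- `U_{n+2}` at the grid scale `k = 2^(n+2)`. The step `s` of the recursive definition is `1/k`. -/
lemma chaconU_cellPt (n : ℕ) (hk : k = 2 ^ (n + 2)) (h : Good k c r u v) :
    chaconU (n + 2) (cellPt k c r u v) =
      if c = 3 ∧ r = 1 then cellPt k c r u v + tv (5 * (1 / k) - 1) (1 - 2 * (1 / k))
      else if c = 2 ∧ r = 1 then cellPt k c r u v + tv (1 / k) 0
      else if c = 3 ∧ r = 0 then cellPt k c r u v + tv (3 * (1 / k)) (1 / k)
      else if c = 2 ∧ r = 0 then cellPt k c r u v + tv (1 / k) 0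
      else if c < 2 ∧ r = 1 then cellPt k c r u v + tv (2 * (1 / k) - 1) (1 - 3 * (1 / k))
      else if c = 1 ∧ r = 0 then cellPt k c r u v + tv (2 * (1 / k) - 1) (1 - 1 / k)
      else if c = 0 ∧ r = 0 then cellPt k c r u v
      else chaconU (n + 1) (cellPt k c r u v) := by
  have hk0 := h.k0
  have hs : (1:ℝ) / 2 ^ (n + 2) = 1 / k := by rw [hk]; push_cast; rfl
  rw [chaconU]
  simp only [hs]
  have t0 : (1:ℝ) = ((k : ℝ) - (0 : ℕ)) / k := by field_simp; simp
  have t1 : 1 - 1 / (k : ℝ) = ((k : ℝ) - (1 : ℕ)) / k := by field_simp; simp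
  have t2 : 1 - 2 * (1 / (k : ℝ)) = ((k : ℝ) - (2 : ℕ)) / k := by field_simp; simp
  have t3 : 1 - 3 * (1 / (k : ℝ)) = ((k : ℝ) - (3 : ℕ)) / k := by field_simp; simp
  have t4 : 1 - 4 * (1 / (k : ℝ)) = ((k : ℝ) - (4 : ℕ)) / k := by field_simp; simp
  have b0 : (0:ℝ) = ((0 : ℕ) : ℝ) / k := by simp
  have b1 : (1:ℝ) / k = ((1 : ℕ) : ℝ) / k := by simp
  have b2 : 2 * (1 / (k : ℝ)) = ((2 : ℕ) : ℝ) / k := by field_simp; simp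
  simp only [h.le_fst _ t4, h.le_fst _ t3, h.le_fst _ t2, h.le_fst _ t1, h.fst_lt _ t0,
    h.fst_lt _ t1, h.fst_lt _ t2, h.fst_lt _ t3, h.snd_le _ b0, h.snd_le _ b1, h.snd_lt _ b1,
    h.snd_lt _ b2]
  congr! 1
  · omega
  congr! 1
  · omega
  congr! 1
  · omega
  congr! 1
  · omega
  congr! 1
  · omega
  congr! 1
  · omega
  congr! 1
  · omega

/-- On the lower right `4 × 2` block of the grid of scale `k = 2^(n+2)`, the map `U_{n+1}` of the
previous stage translates the left half and fixes the right half. -/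
lemma chaconU_prev_cellPt (n : ℕ) (hk : k = 2 ^ (n + 2)) (h : Good k c r u v)
    (hc : c < 4) (hr : r < 2) :
    chaconU (n + 1) (cellPt k c r u v) =
      if 2 ≤ c then cellPt k c r u v + tv (4 * (1 / k) - 1) (1 - 2 * (1 / k))
      else cellPt k c r u v := by
  have hk0 := h.k0
  have hk4 := h.hk
  have t0 : (1:ℝ) = ((k : ℝ) - (0 : ℕ)) / k := by field_simp; simp
  have b0 : (0:ℝ) = ((0 : ℕ) : ℝ) / k := by simp
  cases n with
  | zero =>
    have hk' : k = 4 := by simpa using hk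
    subst hk'
    have t2 : (1:ℝ) / 2 = (((4 : ℕ) : ℝ) - (2 : ℕ)) / (4 : ℕ) := by norm_num
    have b2 : (1:ℝ) / 2 = ((2 : ℕ) : ℝ) / (4 : ℕ) := by norm_num
    rw [chaconU]
    simp only [h.le_fst _ t2, h.fst_lt _ t2, h.fst_lt _ t0, h.snd_le _ b0, h.snd_le _ b2,
      h.snd_lt _ b2]
    rw [if_neg (by omega), if_neg (by omega)]
    have hz : 0 ≤ rep (cellPt 4 c r u v).1 :=
      (h.le_fst 4 (by norm_num)).2 (by omega)
    by_cases h2 : 2 ≤ c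
    · rw [if_pos ⟨hz, h2, by omega, by omega⟩, if_pos h2]
      norm_num
    · rw [if_neg (by omega), if_neg h2]
  | succ m =>
    have hs : (1:ℝ) / 2 ^ (m + 2) = 2 * (1 / k) := by
      rw [hk]; push_cast; rw [pow_succ (2:ℝ) (m + 2)]; field_simp
    rw [chaconU]
    simp only [hs]
    have t2 : 1 - 2 * (1 / (k : ℝ)) = ((k : ℝ) - (2 : ℕ)) / k := by field_simp; simp
    have t4 : 1 - 2 * (2 * (1 / (k : ℝ))) = ((k : ℝ) - (4 : ℕ)) / k := by
      field_simp; norm_num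
    have t6 : 1 - 3 * (2 * (1 / (k : ℝ))) = ((k : ℝ) - (6 : ℕ)) / k := by
      field_simp; norm_num
    have b2 : 2 * (1 / (k : ℝ)) = ((2 : ℕ) : ℝ) / k := by field_simp; simp
    simp only [h.le_fst _ t4, h.le_fst _ t2, h.fst_lt _ t6, h.fst_lt _ t4,
      h.fst_lt _ t2, h.fst_lt _ t0, h.snd_le _ b0, h.snd_le _ b2, h.snd_lt _ b2]
    rw [if_neg (by omega), if_neg (by omega), if_neg (by omega), if_neg (by omega),
      if_neg (by omega)]
    by_cases h2 : 2 ≤ c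
    · rw [if_pos (by omega), if_pos h2]
      congr 2
      ring
    · rw [if_neg (by omega), if_pos (by omega), if_neg h2]

lemma chaconU_eq_moveV (n : ℕ) (hk : k = 2 ^ (n + 2)) (h : Good k c r u v) :
    chaconU (n + 2) (cellPt k c r u v) = chaconU (n + 1) (moveV k (cellPt k c r u v)) := by
  have hk0 := h.k0
  rw [chaconU_cellPt n hk h, moveV_cellPt h]
  by_cases hin : c < 4 ∧ r < 2
  · have p : ∀ {c' r' : ℕ}, c' < 4 → r' < 2 → _ := fun {c' r'} a b =>
      chaconU_prev_cellPt n hk (h.move (c' := c') (r' := r') a b) a b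
    obtain ⟨hc, hr⟩ := hin
    interval_cases c <;> interval_cases r <;>
      simp only [reduceIte, and_true, and_false,
        OfNat.ofNat_ne_zero, OfNat.zero_ne_ofNat, OfNat.ofNat_ne_one, OfNat.one_ne_ofNat,
        one_ne_zero, zero_ne_one, Nat.succ_ne_self, Nat.reduceEqDiff,
        Nat.reduceLT, Nat.reduceLeDiff, p] <;>
      simp only [cellPt, tv_add] <;> congr 1 <;> push_cast <;> ring
  · repeat rw [if_neg (by omega)]

end Values

/-- For `n ≥ 2` and `k = 2^n`, the Chacon-type map decomposes a.e. as
`U_n = U_{n-1} ∘ V_n`, where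
`V_n = E(k,k-3;k,k-2) ∘ R⁺(k,k-3) ∘ R⁺(k,k-3) ∘ S_c(k-1;k-3,k) ∘ S_c(k-1;k-3,k) ∘
 R⁻(k,k-3) ∘ S_c(k;k-3,k-1)` (rightmost applied first). -/
theorem chaconU_decomposition (n : ℕ) (hn : 2 ≤ n) (k : ℕ) (hk : k = 2^n) :
    ∀ᵐ x ∂(volume : Measure T2),
      chaconU n x =
        chaconU (n-1)
          ((mvE k k (k-3) k (k-2) ∘
            mvRplus k k (k-3) ∘
            mvRplus k k (k-3) ∘
            mvS k (k-1) (k-3) k ∘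
            mvS k (k-1) (k-3) k ∘
            mvRminus k k (k-3) ∘
            mvS k k (k-3) (k-1)) x) := by
  obtain ⟨m, rfl⟩ : ∃ m, n = m + 2 := ⟨n - 2, by omega⟩
  have hk4 : 4 ≤ k := by
    rw [hk, pow_add]
    have := Nat.one_le_two_pow (n := m)
    omega
  refine Eventually.of_forall fun x => ?_
  obtain ⟨c, r, u, v, h, rfl⟩ := exists_cellPt k hk4 x
  exact chaconU_eq_moveV m hk h

end
end

section
/- For every n ≥ 2, the iterate U_n^{4^{n−1}−1} of the Chacon-type map U_n agrees, up to a μ-null set, with a single translation of T² on the square [0,2^{−n})×[1−2^{−n},1), and this translation maps [0,2^{−n})×[1−2^{−n},1) onto the adjacent square [2^{−n},2^{1−n})×[1−2^{−n},1). -/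
/-!
The map `U_m` (`m ≥ 1`) permutes the cells of the grid of mesh `2^{-m}`, and acts on them as a single
tower of height `4^m - 1` together with one fixed cell: the orbit of the top-left cell
`[0,2^{-m}) × [1-2^{-m},1)` runs through all cells but the bottom-right one and reaches
`[1-2·2^{-m},1-2^{-m}) × [0,2^{-m})` last. The last cell and the fixed cell form exactly the rectangle
on which `U_{m+1}` differs from `U_m` (`chaconU_eq_of_notMem`).

Hence `U_{m+1}` follows `U_m` along the first `4^m - 2` steps from the top-left cell, uniformly
by translation. Each quarter of the `m`-th tower is traversed in this way, and the redefined values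
of `U_{m+1}` glue the four quarters (in the order upper left, upper right, lower left, lower right)
and three quarters of the fixed cell to a tower of height `4 (4^m - 1) + 3 = 4^{m+1} - 1`; this is the
induction in `chaconU_tower`. The theorem for `n = m + 1` is the first gluing: after `4^m - 2` steps
the upper left quarter is at the last cell, and one more step of `U_{m+1}` takes it to the upper right
quarter of the top-left cell, so that the total displacement is `(2^{-n}, 0)`. The agreement holds at
every point of the square, so the exceptional null set is empty.
-/

open MeasureTheory Filter Set
open scoped ENNReal symmDiff

noncomputable section

lemma tv_rep (x : T2) : tv (rep x.1) (rep x.2) = x := by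
  simp only [tv, coe_rep]

/-- `OrbitPath f D k x y`: the point `x` arrives at `y` after `k` steps of `f`, and none of the first
`k` points of its orbit (`y` excluded) lies in `D`. -/
def OrbitPath (f : T2 → T2) (D : Set T2) (k : ℕ) (x y : T2) : Prop :=
  f^[k] x = y ∧ ∀ j < k, f^[j] x ∉ D

lemma OrbitPath.trans {f : T2 → T2} {D : Set T2} {k l : ℕ} {x y z : T2}
    (h₁ : OrbitPath f D k x y) (h₂ : OrbitPath f D l y z) : OrbitPath f D (k + l) x z := by
  have key : ∀ j, f^[k + j] x = f^[j] y := fun j => by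
    rw [add_comm, Function.iterate_add_apply, h₁.1]
  refine ⟨(key l).trans h₂.1, fun j hj => ?_⟩
  rcases lt_or_ge j k with h | h
  · exact h₁.2 j h
  · obtain ⟨i, rfl⟩ := Nat.exists_eq_add_of_le h
    rw [key]
    exact h₂.2 i (by omega)

lemma OrbitPath.step {f : T2 → T2} {D : Set T2} {x y : T2} (hx : x ∉ D) (h : f x = y) :
    OrbitPath f D 1 x y := by
  refine ⟨h, fun j hj => ?_⟩
  obtain rfl : j = 0 := by omega
  exact hx

lemma OrbitPath.congr {f g : T2 → T2} {D D' : Set T2} {k : ℕ} {x y : T2}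
    (h : OrbitPath f D k x y) (hfg : ∀ x ∉ D, g x = f x) (hD : D' ⊆ D) :
    OrbitPath g D' k x y := by
  have key : ∀ j ≤ k, g^[j] x = f^[j] x := by
    intro j
    induction j with
    | zero => intro _; rfl
    | succ j ih =>
      intro hj
      rw [Function.iterate_succ_apply', Function.iterate_succ_apply', ih (by omega),
        hfg _ (h.2 j (by omega))]
  exact ⟨(key k le_rfl).trans h.1, fun j hj hm => h.2 j hj (hD (key j hj.le ▸ hm))⟩

/-- The rectangle `[1-2s,1) × [0,s)`: for `s = 2^{-m}` it is the union of the last cell of the tower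
of `U_m` and the fixed cell of `U_m`. -/
def cornerRect (s : ℝ) : Set T2 := {x | 1 - 2 * s ≤ rep x.1 ∧ rep x.2 < s}

lemma tv_notMem_cornerRect {s a b : ℝ} (ha : 0 ≤ a) (ha' : a < 1) (hb : 0 ≤ b) (hb' : b < 1)
    (h : a < 1 - 2 * s ∨ s ≤ b) : tv a b ∉ cornerRect s := by
  rintro ⟨h₁, h₂⟩
  simp only [tv, rep_coe ha ha', rep_coe hb hb'] at h₁ h₂
  rcases h with h | h <;> linarith

lemma cornerRect_subset {s : ℝ} (hs : 0 < s) : cornerRect s ⊆ cornerRect (2 * s) :=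
  fun _ hx => ⟨by linarith [hx.1], by linarith [hx.2]⟩

lemma chaconU_eq_of_notMem (n : ℕ) {s : ℝ} (hs : s = 1 / 2 ^ (n + 2)) {x : T2}
    (hx : x ∉ cornerRect (2 * s)) : chaconU (n + 2) x = chaconU (n + 1) x := by
  have hpos : 0 < s := by rw [hs]; positivity
  have hx' : ∀ p : Prop, 1 - 4 * s ≤ rep x.1 → rep x.2 < 2 * s → p := fun p h₁ h₂ =>
    (hx ⟨by linarith, h₂⟩).elim
  conv_lhs => unfold chaconU
  simp only [← hs]
  rw [if_neg, if_neg, if_neg, if_neg, if_neg, if_neg, if_neg] <;>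
    · rintro ⟨_, _, _, _⟩
      exact hx' _ (by linarith) (by linarith)

/-! ### The values of `U_{n+2}` on the rectangle where it differs from `U_{n+1}` -/

lemma chaconU_upperLeft (n : ℕ) {s a b : ℝ} (hs : s = 1 / 2 ^ (n + 2)) (hpos : 0 < s)
    (hs4 : 4 * s ≤ 1) (ha : 1 - 4 * s ≤ a) (ha' : a < 1 - 3 * s) (hb : s ≤ b) (hb' : b < 2 * s) :
    chaconU (n + 2) (tv a b) = tv (a + (5 * s - 1)) (b + (1 - 2 * s)) := by
  have h₁ : rep (tv a b).1 = a := rep_coe (by linarith) (by linarith)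
  have h₂ : rep (tv a b).2 = b := rep_coe (by linarith) (by linarith)
  unfold chaconU
  simp only [← hs, h₁, h₂]
  rw [if_pos ⟨by linarith, by linarith, by linarith, by linarith⟩, tv_add]

lemma chaconU_upperRight (n : ℕ) {s a b : ℝ} (hs : s = 1 / 2 ^ (n + 2)) (hpos : 0 < s)
    (hs4 : 4 * s ≤ 1) (ha : 1 - 3 * s ≤ a) (ha' : a < 1 - 2 * s) (hb : s ≤ b) (hb' : b < 2 * s) :
    chaconU (n + 2) (tv a b) = tv (a + s) (b) := by
  have h₁ : rep (tv a b).1 = a := rep_coe (by linarith) (by linarith)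
  have h₂ : rep (tv a b).2 = b := rep_coe (by linarith) (by linarith)
  unfold chaconU
  simp only [← hs, h₁, h₂]
  rw [if_neg, if_pos ⟨by linarith, by linarith, by linarith, by linarith⟩, tv_add, add_zero]
  all_goals
    rintro ⟨_, _, _, _⟩
    linarith

lemma chaconU_lowerLeft (n : ℕ) {s a b : ℝ} (hs : s = 1 / 2 ^ (n + 2)) (hpos : 0 < s)
    (hs4 : 4 * s ≤ 1) (ha : 1 - 4 * s ≤ a) (ha' : a < 1 - 3 * s) (hb : 0 ≤ b) (hb' : b < s) :
    chaconU (n + 2) (tv a b) = tv (a + 3 * s) (b + s) := by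
  have h₁ : rep (tv a b).1 = a := rep_coe (by linarith) (by linarith)
  have h₂ : rep (tv a b).2 = b := rep_coe (by linarith) (by linarith)
  unfold chaconU
  simp only [← hs, h₁, h₂]
  rw [if_neg, if_neg, if_pos ⟨by linarith, by linarith, by linarith, by linarith⟩, tv_add]
  all_goals
    rintro ⟨_, _, _, _⟩
    linarith

lemma chaconU_lowerRight (n : ℕ) {s a b : ℝ} (hs : s = 1 / 2 ^ (n + 2)) (hpos : 0 < s)
    (hs4 : 4 * s ≤ 1) (ha : 1 - 3 * s ≤ a) (ha' : a < 1 - 2 * s) (hb : 0 ≤ b) (hb' : b < s) :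
    chaconU (n + 2) (tv a b) = tv (a + s) (b) := by
  have h₁ : rep (tv a b).1 = a := rep_coe (by linarith) (by linarith)
  have h₂ : rep (tv a b).2 = b := rep_coe (by linarith) (by linarith)
  unfold chaconU
  simp only [← hs, h₁, h₂]
  rw [if_neg, if_neg, if_neg, if_pos ⟨by linarith, by linarith, by linarith, by linarith⟩, tv_add, add_zero]
  all_goals
    rintro ⟨_, _, _, _⟩
    linarith

lemma chaconU_spacer (n : ℕ) {s a b : ℝ} (hs : s = 1 / 2 ^ (n + 2)) (hpos : 0 < s)
    (hs4 : 4 * s ≤ 1) (ha : 1 - 2 * s ≤ a) (ha' : a < 1) (hb : s ≤ b) (hb' : b < 2 * s) :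
    chaconU (n + 2) (tv a b) = tv (a + (2 * s - 1)) (b + (1 - 3 * s)) := by
  have h₁ : rep (tv a b).1 = a := rep_coe (by linarith) (by linarith)
  have h₂ : rep (tv a b).2 = b := rep_coe (by linarith) (by linarith)
  unfold chaconU
  simp only [← hs, h₁, h₂]
  rw [if_neg, if_neg, if_neg, if_neg, if_pos ⟨by linarith, by linarith, by linarith, by linarith⟩, tv_add]
  all_goals
    rintro ⟨_, _, _, _⟩
    linarith

/-! ### The tower of `U_m` -/

lemma chaconU_one_left {a b : ℝ} (ha : 0 ≤ a) (ha' : a < 1 / 2) (hb : 1 / 2 ≤ b) (hb' : b < 1) :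
    chaconU 1 (tv a b) = tv (a + 1 / 2) b := by
  have h₁ : rep (tv a b).1 = a := rep_coe (by linarith) (by linarith)
  have h₂ : rep (tv a b).2 = b := rep_coe (by linarith) (by linarith)
  unfold chaconU
  simp only [h₁, h₂]
  rw [if_pos ⟨ha, ha', hb, hb'⟩, tv_add, add_zero]

lemma chaconU_one_right {a b : ℝ} (ha : 1 / 2 ≤ a) (ha' : a < 1) (hb : 1 / 2 ≤ b) (hb' : b < 1) :
    chaconU 1 (tv a b) = tv (a - 1 / 2) (b - 1 / 2) := by
  have h₁ : rep (tv a b).1 = a := rep_coe (by linarith) (by linarith)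
  have h₂ : rep (tv a b).2 = b := rep_coe (by linarith) (by linarith)
  unfold chaconU
  simp only [h₁, h₂]
  rw [if_neg, if_pos ⟨ha, ha', hb, hb'⟩, tv_add, sub_eq_add_neg, sub_eq_add_neg]
  rintro ⟨_, _, _, _⟩
  linarith

/-- From the top-left cell, `4^m - 2` steps of `U_m` lead to the last cell of the tower, by the same
translation for all points, and the orbit does not meet `cornerRect` before. The index is shifted by
one: the statement is about `U_{m+1}`. -/
lemma chaconU_tower (m : ℕ) : ∀ s : ℝ, s = 1 / 2 ^ (m + 1) → ∀ a b : ℝ,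
    0 ≤ a → a < s → 1 - s ≤ b → b < 1 →
    OrbitPath (chaconU (m + 1)) (cornerRect s) (4 ^ (m + 1) - 2)
      (tv a b) (tv (a + (1 - 2 * s)) (b - (1 - s))) := by
  induction m with
  | zero =>
    intro s hs a b ha ha' hb hb'
    norm_num at hs
    subst hs
    have p₁ : OrbitPath (chaconU 1) (cornerRect (1 / 2)) 1 (tv a b) (tv (a + 1 / 2) b) :=
      .step (tv_notMem_cornerRect ha (by linarith) (by linarith) hb' (.inr (by linarith)))
        (chaconU_one_left ha ha' (by linarith) hb')
    have p₂ : OrbitPath (chaconU 1) (cornerRect (1 / 2)) 1 (tv (a + 1 / 2) b)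
        (tv (a + 1 / 2 - 1 / 2) (b - 1 / 2)) :=
      .step (tv_notMem_cornerRect (by linarith) (by linarith) (by linarith) hb'
          (.inr (by linarith)))
        (chaconU_one_right (by linarith) (by linarith) (by linarith) hb')
    convert p₁.trans p₂ using 2 <;> norm_num
  | succ m ih =>
    intro s hs a b ha ha' hb hb'
    have hpos : 0 < s := by rw [hs]; positivity
    have h2s : 2 * s = 1 / 2 ^ (m + 1) := by rw [hs]; field_simp; ring
    have hs4 : 4 * s ≤ 1 := by
      have h : (1:ℝ) / 2 ^ m ≤ 1 := by
        rw [div_le_one (by positivity)]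
        exact one_le_pow₀ (by norm_num)
      have : 4 * s = 1 / 2 ^ m := by rw [hs]; field_simp; ring
      linarith
    -- Outside `cornerRect (2 * s)` the maps `U_{m+2}` and `U_{m+1}` agree, so the old tower is climbed.
    have climb : ∀ a b : ℝ, 0 ≤ a → a < 2 * s → 1 - 2 * s ≤ b → b < 1 →
        OrbitPath (chaconU (m + 2)) (cornerRect s) (4 ^ (m + 1) - 2)
          (tv a b) (tv (a + (1 - 4 * s)) (b - (1 - 2 * s))) := by
      intro a b ha ha' hb hb'
      have h := (ih (2 * s) h2s a b ha ha' hb hb').congr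
        (fun x hx => chaconU_eq_of_notMem m hs hx) (cornerRect_subset hpos)
      convert h using 2
      ring
    have one : ∀ a b c d c' d' : ℝ, 0 ≤ a → a < 1 → 0 ≤ b → b < 1 → (a < 1 - 2 * s ∨ s ≤ b) →
        chaconU (m + 2) (tv a b) = tv c d → c = c' → d = d' →
        OrbitPath (chaconU (m + 2)) (cornerRect s) 1 (tv a b) (tv c' d') := by
      rintro a b c d _ _ h₁ h₂ h₃ h₄ h₅ h₆ rfl rfl
      exact .step (tv_notMem_cornerRect h₁ h₂ h₃ h₄ h₅) h₆
    -- Upper left quarter, then over to the upper right quarter.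
    have p₁ := climb a b (by linarith) (by linarith) (by linarith) (by linarith)
    have q₁ := one (a + (1 - 4 * s)) (b - (1 - 2 * s)) _ _ (a + s) b (by linarith) (by linarith)
      (by linarith) (by linarith) (.inl (by linarith))
      (chaconU_upperLeft m hs hpos hs4 (by linarith) (by linarith) (by linarith) (by linarith))
      (by ring) (by ring)
    -- Upper right quarter, then over to the lower left quarter through the old fixed cell.
    have p₂ := climb (a + s) b (by linarith) (by linarith) (by linarith) (by linarith)
    have q₂ := one (a + s + (1 - 4 * s)) (b - (1 - 2 * s)) _ _ (a + (1 - 2 * s)) (b - (1 - 2 * s))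
      (by linarith) (by linarith) (by linarith) (by linarith) (.inl (by linarith))
      (chaconU_upperRight m hs hpos hs4 (by linarith) (by linarith) (by linarith) (by linarith))
      (by ring) (by ring)
    have r₂ := one (a + (1 - 2 * s)) (b - (1 - 2 * s)) _ _ a (b - s)
      (by linarith) (by linarith) (by linarith) (by linarith) (.inr (by linarith))
      (chaconU_spacer m hs hpos hs4 (by linarith) (by linarith) (by linarith) (by linarith))
      (by ring) (by ring)
    -- Lower left quarter, then over to the lower right quarter through the old fixed cell.
    have p₃ := climb a (b - s) (by linarith) (by linarith) (by linarith) (by linarith)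
    have q₃ := one (a + (1 - 4 * s)) (b - s - (1 - 2 * s)) _ _ (a + (1 - s)) (b - (1 - 2 * s))
      (by linarith) (by linarith) (by linarith) (by linarith) (.inl (by linarith))
      (chaconU_lowerLeft m hs hpos hs4 (by linarith) (by linarith) (by linarith) (by linarith))
      (by ring) (by ring)
    have r₃ := one (a + (1 - s)) (b - (1 - 2 * s)) _ _ (a + s) (b - s)
      (by linarith) (by linarith) (by linarith) (by linarith) (.inr (by linarith))
      (chaconU_spacer m hs hpos hs4 (by linarith) (by linarith) (by linarith) (by linarith))
      (by ring) (by ring)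
    -- Lower right quarter, then one step into the old fixed cell, the end of the new tower.
    have p₄ := climb (a + s) (b - s) (by linarith) (by linarith) (by linarith) (by linarith)
    have q₄ := one (a + s + (1 - 4 * s)) (b - s - (1 - 2 * s)) _ _
      (a + (1 - 2 * s)) (b - (1 - s))
      (by linarith) (by linarith) (by linarith) (by linarith) (.inl (by linarith))
      (chaconU_lowerRight m hs hpos hs4 (by linarith) (by linarith) (by linarith) (by linarith))
      (by ring) (by ring)
    have h := ((((((((p₁.trans q₁).trans p₂).trans q₂).trans r₂).trans p₃).trans q₃).trans
      r₃).trans p₄).trans q₄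
    have hlen : 4 ^ (m + 1 + 1) - 2 = 4 ^ (m + 1) - 2 + 1 + (4 ^ (m + 1) - 2) + 1 + 1 +
        (4 ^ (m + 1) - 2) + 1 + 1 + (4 ^ (m + 1) - 2) + 1 := by
      have : 0 < 4 ^ m := by positivity
      rw [pow_succ 4 (m + 1), pow_succ 4 m]
      omega
    rw [hlen]
    exact h

/-- For `n ≥ 2`, the iterate `U_n^{4^{n-1}-1}` agrees up to a null set with a single
translation of the torus on the square `[0,2^{-n}) × [1-2^{-n},1)`, and this translation
maps that square onto the adjacent square `[2^{-n},2^{1-n}) × [1-2^{-n},1)`. -/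
theorem chaconU_iterate_is_translation (n : ℕ) (hn : 2 ≤ n)
    (S S' : Set T2)
    (hS : S = {x : T2 | 0 ≤ rep x.1 ∧ rep x.1 < 1/2^n ∧
                        1 - 1/2^n ≤ rep x.2 ∧ rep x.2 < 1})
    (hS' : S' = {x : T2 | 1/2^n ≤ rep x.1 ∧ rep x.1 < 2/2^n ∧
                          1 - 1/2^n ≤ rep x.2 ∧ rep x.2 < 1}) :
    ∃ v : T2,
      volume {x : T2 | x ∈ S ∧ (chaconU n)^[4 ^ (n-1) - 1] x ≠ x + v} = 0 ∧
      (fun x : T2 => x + v) '' S = S' := by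
  subst hS hS'
  obtain ⟨m, rfl⟩ := Nat.exists_eq_add_of_le' hn
  obtain ⟨s, hs⟩ : ∃ s : ℝ, s = 1 / 2 ^ (m + 2) := ⟨_, rfl⟩
  have hpos : 0 < s := by rw [hs]; positivity
  have h2s : 2 * s = 1 / 2 ^ (m + 1) := by rw [hs]; field_simp; ring
  have h2s' : (2:ℝ) / 2 ^ (m + 2) = 2 * s := by rw [hs]; ring
  have hs4 : 4 * s ≤ 1 := by
    have h : (1:ℝ) / 2 ^ m ≤ 1 := by
      rw [div_le_one (by positivity)]
      exact one_le_pow₀ (by norm_num)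
    have : 4 * s = 1 / 2 ^ m := by rw [hs]; field_simp; ring
    linarith
  rw [h2s', ← hs]
  refine ⟨tv s 0, ?_, ?_⟩
  · convert measure_empty (μ := (volume : Measure T2))
    refine eq_empty_of_forall_notMem ?_
    rintro x ⟨⟨ha, ha', hb, hb'⟩, hne⟩
    apply hne
    have h := ((chaconU_tower m (2 * s) h2s (rep x.1) (rep x.2) ha (by linarith) (by linarith)
      hb').congr (fun x hx => chaconU_eq_of_notMem m hs hx) subset_rfl).1
    have hlen : 4 ^ (m + 2 - 1) - 1 = (4 ^ (m + 1) - 2) + 1 := by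
      have : 0 < 4 ^ m := by positivity
      rw [Nat.add_sub_assoc (by norm_num), pow_succ 4 m]
      omega
    rw [tv_rep] at h
    rw [hlen, Function.iterate_succ_apply', h, chaconU_upperLeft m hs hpos hs4 (by linarith)
      (by linarith) (by linarith) (by linarith)]
    conv_rhs => rw [← tv_rep x, tv_add]
    congr 1 <;> ring
  · ext y
    constructor
    · rintro ⟨x, ⟨ha, ha', hb, hb'⟩, rfl⟩
      have hx : x + tv s 0 = tv (rep x.1 + s) (rep x.2) := by
        conv_lhs => rw [← tv_rep x, tv_add, add_zero]
      have h₁ : rep (tv (rep x.1 + s) (rep x.2)).1 = rep x.1 + s :=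
        rep_coe (by linarith) (by linarith)
      have h₂ : rep (tv (rep x.1 + s) (rep x.2)).2 = rep x.2 := rep_coe (by linarith) hb'
      simp only [hx, mem_ofPred_eq, h₁, h₂]
      exact ⟨by linarith, by linarith, hb, hb'⟩
    · rintro ⟨ha, ha', hb, hb'⟩
      have h₁ : rep (tv (rep y.1 - s) (rep y.2)).1 = rep y.1 - s :=
        rep_coe (by linarith) (by linarith)
      have h₂ : rep (tv (rep y.1 - s) (rep y.2)).2 = rep y.2 := rep_coe (by linarith) hb'
      refine ⟨tv (rep y.1 - s) (rep y.2), ?_, ?_⟩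
      · simp only [mem_ofPred_eq, h₁, h₂]
        exact ⟨by linarith, by linarith, hb, hb'⟩
      · simp only [tv_add, sub_add_cancel, add_zero, tv_rep]

end
end
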